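/- arXiv:1811.00248 — 5 statements merged into one kernel-verified Lean document; each statement's English description precedes it below -/
import Mathlib

section
/- For every natural number n: H_{4n}(G(x,4)) = 1, H_{4n+1}(G(x,4)) = 1, H_{4n+2}(G(x,4)) = −8(n+1), and H_{4n+3}(G(x,4)) = 8(n+1). -/
/-!
Write `z = t + 2 + t⁻¹`. The moment `binom(2k+4, k)` is the constant term of `z ^ k (1 + t) ^ 4`.
In place of the monomials `z ^ i`, use the monic polynomials
`V_m = (t ^ (m + 1/2) + t ^ (-m - 1/2)) / (t ^ (1/2) + t ^ (-1/2))` in `z`. Since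
`V_m V_l z` is a Laurent polynomial, the Gram matrix `gram m l` of the moment functional in this
basis is banded (Toeplitz plus a Hankel corner), and the Hankel matrix is `B * gram * Bᵀ` with `B`
lower unitriangular (`hankel_factor`; the `B i m` are the binomials `binom(2i+1, i+1+m)`).

The orthogonal polynomials of the functional have explicit coefficients in the basis `V_m`: the
coefficient of `V_j` in the `n`-th one is `quasi n (n - j)`, where `quasi n` is a function on `ℤ`,
linear on residue classes modulo 8. It satisfies the homogeneous recurrence given by the
symbol of the Toeplitz part (`quasi_rec`), it is symmetric under `d ↦ 2n + 1 - d` near the boundary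
(`quasi_symm`), which absorbs the Hankel corner, and it vanishes at `-1` and `-2`. Hence
`gram * U` is lower triangular for the upper unitriangular `U j n = quasi n (n - j)`, with diagonal
entries `-quasi n (-3)`, namely `1, -8(q+1), -1, 1/(8(q+1))` for `n = 4q, 4q+1, 4q+2, 4q+3`. The
Hankel determinants are the partial products of this sequence.
-/

/-- The Hankel determinant `H_n(a)` of a sequence `a : ℕ → ℤ`: the determinant of the
`n × n` matrix whose `(i,j)` entry is `a (i + j)`.  `H_0 = 1` by convention (empty matrix). -/
def hankel (a : ℕ → ℤ) (n : ℕ) : ℤ :=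
  Matrix.det (Matrix.of fun i j : Fin n => a (i.val + j.val))

/-- The sequence `a_k = binom(2k+r, k)`, whose generating function is
`G(x,r) = C(x)^r / √(1-4x)`. -/
def centralSeq (r : ℕ) (k : ℕ) : ℤ :=
  ((2 * k + r).choose k : ℤ)

open Finset Polynomial

/-! ### Factorization of the Hankel matrix -/

/-- The Gram matrix of the moment functional in the basis `V_m`. -/
def gram (m l : ℕ) : ℚ :=
  (if l = m + 1 then 1 else 0) + 2 * (if l = m + 2 then 1 else 0) + (if l = m + 3 then 1 else 0)
  + (if m = l + 1 then 1 else 0) + 2 * (if m = l + 2 then 1 else 0) + (if m = l + 3 then 1 else 0)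
  + (if m + l = 0 then 1 else 0) + 2 * (if m + l = 1 then 1 else 0) + (if m + l = 2 then 1 else 0)

/-- The coefficient of `V_m` in `z ^ i`. -/
def vCoeff (i m : ℕ) : ℚ := ((2 * i + 1).choose (i + 1 + m) : ℚ)

/-- The expansion of `z ^ i` in the basis `V_m`, multiplied by `t ^ i * (1 + t)`. -/
lemma one_add_X_pow_odd (i n : ℕ) (hi : i < n) :
    ((1 + X : ℚ[X]) ^ (2 * i + 1)) =
      ∑ m ∈ range n, C (vCoeff i m) * (X ^ (i + m + 1) + X ^ (i - m)) := by
  have h0 : ∑ m ∈ range n, C (vCoeff i m) * (X ^ (i + m + 1) + X ^ (i - m) : ℚ[X]) =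
      ∑ m ∈ range (i + 1), C (vCoeff i m) * (X ^ (i + m + 1) + X ^ (i - m)) := by
    symm
    apply sum_subset
    · intro x; simp; omega
    · intro x _ hx
      have : vCoeff i x = 0 := by
        unfold vCoeff
        rw [Nat.choose_eq_zero_of_lt (by simp at hx; omega)]; simp
      simp [this]
  rw [h0, add_comm (1 : ℚ[X]) X, add_pow]
  rw [show 2 * i + 1 + 1 = (i + 1) + (i + 1) by ring, sum_range_add]
  simp only [mul_add, sum_add_distrib]
  rw [add_comm]
  congr 1
  · apply sum_congr rfl
    intro m _
    simp only [one_pow, mul_one, vCoeff, map_natCast]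
    rw [mul_comm]
    congr 2
    ring
  · rw [← sum_range_reflect]
    apply sum_congr rfl
    intro m hm
    simp at hm
    simp only [one_pow, mul_one, vCoeff, map_natCast]
    rw [mul_comm]
    congr 2
    · rw [← Nat.choose_symm (by omega)]
      congr 1
      omega

lemma coeff_shift (a k : ℕ) : (X ^ a * (1 + X) ^ 2 : ℚ[X]).coeff k =
    (if k = a then 1 else 0) + 2 * (if k = a + 1 then 1 else 0)
      + (if k = a + 2 then 1 else 0) := by
  have : (X ^ a * (1 + X) ^ 2 : ℚ[X]) = X ^ a + C 2 * X ^ (a + 1) + X ^ (a + 2) := by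
    simp only [map_ofNat]; ring
  rw [this]
  simp only [coeff_add, coeff_C_mul, coeff_X_pow]

lemma coeff_gram (i j m l : ℕ) (hm : m ≤ i) (hl : l ≤ j) :
    ((X ^ (i + m + 1) + X ^ (i - m)) * (X ^ (j + l + 1) + X ^ (j - l)) * (1 + X) ^ 2 :
      ℚ[X]).coeff (i + j) = gram m l := by
  have : ((X ^ (i + m + 1) + X ^ (i - m)) * (X ^ (j + l + 1) + X ^ (j - l)) * (1 + X) ^ 2 : ℚ[X])
     = X ^ (i + m + 1 + (j + l + 1)) * (1 + X) ^ 2 + X ^ (i + m + 1 + (j - l)) * (1 + X) ^ 2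
      + X ^ (i - m + (j + l + 1)) * (1 + X) ^ 2 + X ^ (i - m + (j - l)) * (1 + X) ^ 2 := by ring
  rw [this]
  simp only [coeff_add, coeff_shift, gram]
  have e1 : (i + j = i + m + 1 + (j + l + 1)) = False := by simp; omega
  have e2 : (i + j = i + m + 1 + (j + l + 1) + 1) = False := by simp; omega
  have e3 : (i + j = i + m + 1 + (j + l + 1) + 2) = False := by simp; omega
  have e4 : (i + j = i + m + 1 + (j - l)) = (l = m + 1) := by apply propext; omega
  have e5 : (i + j = i + m + 1 + (j - l) + 1) = (l = m + 2) := by apply propext; omega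
  have e6 : (i + j = i + m + 1 + (j - l) + 2) = (l = m + 3) := by apply propext; omega
  have e7 : (i + j = i - m + (j + l + 1)) = (m = l + 1) := by apply propext; omega
  have e8 : (i + j = i - m + (j + l + 1) + 1) = (m = l + 2) := by apply propext; omega
  have e9 : (i + j = i - m + (j + l + 1) + 2) = (m = l + 3) := by apply propext; omega
  have e10 : (i + j = i - m + (j - l)) = (m + l = 0) := by apply propext; omega
  have e11 : (i + j = i - m + (j - l) + 1) = (m + l = 1) := by apply propext; omega
  have e12 : (i + j = i - m + (j - l) + 2) = (m + l = 2) := by apply propext; omega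
  simp only [e1, e2, e3, e4, e5, e6, e7, e8, e9, e10, e11, e12, if_false]
  ring

/-- The entry `(i, j)` of `B * gram * Bᵀ`: compare the coefficients of `t ^ (i + j)` in
`(1 + t) ^ (2i+1) * (1 + t) ^ (2j+1) * (1 + t) ^ 2`. -/
lemma hankel_factor (i j n : ℕ) (hi : i < n) (hj : j < n) :
    (centralSeq 4 (i + j) : ℚ) =
      ∑ l ∈ range n, (∑ m ∈ range n, vCoeff i m * gram m l) * vCoeff j l := by
  have h1 : (centralSeq 4 (i + j) : ℚ) =
      ((1 + X : ℚ[X]) ^ (2 * i + 1) * (1 + X) ^ (2 * j + 1) * (1 + X) ^ 2).coeff (i + j) := by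
    rw [← pow_add, ← pow_add, coeff_one_add_X_pow, centralSeq]
    push_cast
    congr 2
    ring
  rw [h1, one_add_X_pow_odd i n hi, one_add_X_pow_odd j n hj, sum_mul_sum, sum_mul, finsetSum_coeff]
  simp only [sum_mul, finsetSum_coeff]
  rw [sum_comm]
  apply sum_congr rfl
  intro l _
  apply sum_congr rfl
  intro m _
  have : (C (vCoeff i m) * (X ^ (i + m + 1) + X ^ (i - m)) *
      (C (vCoeff j l) * (X ^ (j + l + 1) + X ^ (j - l))) * (1 + X) ^ 2 : ℚ[X]) =
      C (vCoeff i m * vCoeff j l) *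
      ((X ^ (i + m + 1) + X ^ (i - m)) * (X ^ (j + l + 1) + X ^ (j - l)) * (1 + X) ^ 2) := by
    rw [C_mul]; ring
  rw [this, coeff_C_mul]
  by_cases hm : m ≤ i
  · by_cases hl : l ≤ j
    · rw [coeff_gram i j m l hm hl]; ring
    · have : vCoeff j l = 0 := by
        unfold vCoeff
        rw [Nat.choose_eq_zero_of_lt (by omega)]; simp
      simp [this]
  · have : vCoeff i m = 0 := by
      unfold vCoeff
      rw [Nat.choose_eq_zero_of_lt (by omega)]; simp
    simp [this]

/-! ### Coefficients of the orthogonal polynomials -/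

/-- The value at `d = 8 s + r` of the coefficient function `quasi n` for `n = 4 q + k`. -/
def cell (k : ℕ) (q s : ℚ) (r : ℕ) : ℚ :=
  match k, r with
  | 0, 0 => 1
  | 0, 1 => 1
  | 0, 2 => 0
  | 0, 3 => 0
  | 0, 4 => -1
  | 0, 5 => -1
  | 0, 6 => 0
  | 0, 7 => 0
  | 1, 0 => 8 * s + 1
  | 1, 1 => -(8 * s + 3)
  | 1, 2 => -(8 * (q - s) + 3)
  | 1, 3 => 8 * (q - s) + 1
  | 1, 4 => -(8 * (q - s))
  | 1, 5 => 8 * (q - s)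
  | 1, 6 => 8 * (s + 1)
  | 1, 7 => -(8 * (s + 1))
  | 2, 0 => 1
  | 2, 1 => -1
  | 2, 2 => 0
  | 2, 3 => 0
  | 2, 4 => -1
  | 2, 5 => 1
  | 2, 6 => 0
  | 2, 7 => 0
  | 3, 0 => 8 * (q + 1 - s) / (8 * (q + 1))
  | 3, 1 => -(8 * (q + 1 - s)) / (8 * (q + 1))
  | 3, 2 => (8 * (q + 1 - s) - 1) / (8 * (q + 1))
  | 3, 3 => -(8 * (q + 1 - s) - 3) / (8 * (q + 1))
  | 3, 4 => -(8 * s + 5) / (8 * (q + 1))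
  | 3, 5 => (8 * s + 7) / (8 * (q + 1))
  | 3, 6 => -(8 * (s + 1)) / (8 * (q + 1))
  | 3, 7 => 8 * (s + 1) / (8 * (q + 1))
  | _, _ => 0

/-- For `0 ≤ d ≤ n`, the coefficient of `V_(n - d)` in the `n`-th orthogonal polynomial; other
values of `d` continue the recurrence. -/
def quasi (n : ℕ) (d : ℤ) : ℚ :=
  cell (n % 4) ((n / 4 : ℕ) : ℚ) ((d / 8 : ℤ) : ℚ) (d % 8).toNat

lemma quasi_eq (n q k : ℕ) (d s : ℤ) (r : ℕ) (hn : n = 4 * q + k) (hk : k < 4)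
    (hd : d = 8 * s + r) (hr : r < 8) : quasi n d = cell k q s r := by
  unfold quasi
  rw [show n % 4 = k by omega, show n / 4 = q by omega, show d / 8 = s by omega,
    show (d % 8).toNat = r by omega]

set_option maxHeartbeats 1000000 in
/-- The Toeplitz part of `gram` annihilates `quasi n`. -/
lemma quasi_rec (n : ℕ) (d : ℤ) :
    quasi n (d + 1) + 2 * quasi n (d + 2) + quasi n (d + 3)
      + quasi n (d - 1) + 2 * quasi n (d - 2) + quasi n (d - 3) = 0 := by
  obtain ⟨q, k, hk, hn⟩ : ∃ q k, k < 4 ∧ n = 4 * q + k := ⟨n / 4, n % 4, by omega, by omega⟩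
  obtain ⟨s, r, hr, hd⟩ : ∃ (s : ℤ) (r : ℕ), r < 8 ∧ d = 8 * s + r :=
    ⟨d / 8, (d % 8).toNat, by omega, by omega⟩
  have key : ∀ (e : ℤ), quasi n (d + e) =
      cell k q ((s + (r + e) / 8 : ℤ) : ℚ) ((r + e) % 8).toNat := fun e =>
    quasi_eq n q k _ _ _ hn hk (by omega) (by omega)
  rw [sub_eq_add_neg, sub_eq_add_neg, sub_eq_add_neg]
  simp only [key]
  clear key
  interval_cases k <;> interval_cases r <;> simp <;> simp only [cell] <;> ring

set_option maxHeartbeats 1000000 in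
/-- Symmetry across the boundary: position `d = n` is `V_0`, so `d = n + 1, n + 2, n + 3` are the
reflections of `V_0`, `V_1`, `V_2`. -/
lemma quasi_symm (n : ℕ) : quasi n (n + 1) = quasi n n ∧ quasi n (n + 2) = quasi n (n - 1)
    ∧ quasi n (n + 3) = quasi n (n - 2) := by
  obtain ⟨p, e, he, hn⟩ : ∃ p e, e < 8 ∧ n = 8 * p + e := ⟨n / 8, n % 8, by omega, by omega⟩
  have key : ∀ (c : ℤ), quasi n (n + c) =
      cell (e % 4) ((2 * p + e / 4 : ℕ) : ℚ) ((p + (e + c) / 8 : ℤ) : ℚ) ((e + c) % 8).toNat :=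
    fun c => quasi_eq n _ _ _ _ _ (by omega) (by omega) (by omega) (by omega)
  have k0 := key 0
  rw [add_zero] at k0
  have hp : (2 * (p : ℚ) + 1) ≠ 0 := by positivity
  have hp' : (2 * (p : ℚ) + 1 + 1) ≠ 0 := by positivity
  rw [sub_eq_add_neg, sub_eq_add_neg]
  simp only [key, k0]
  clear key k0
  interval_cases e <;> refine ⟨?_, ?_, ?_⟩ <;> simp <;> simp only [cell] <;> ring

lemma quasi_zero (n : ℕ) : quasi n 0 = 1 := by
  obtain ⟨q, k, hk, hn⟩ : ∃ q k, k < 4 ∧ n = 4 * q + k := ⟨n / 4, n % 4, by omega, by omega⟩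
  rw [quasi_eq n q k 0 0 0 hn hk (by omega) (by omega)]
  have : (q : ℚ) + 1 ≠ 0 := by positivity
  interval_cases k <;> simp [cell, this]

lemma quasi_neg_one (n : ℕ) : quasi n (-1) = 0 := by
  obtain ⟨q, k, hk, hn⟩ : ∃ q k, k < 4 ∧ n = 4 * q + k := ⟨n / 4, n % 4, by omega, by omega⟩
  rw [quasi_eq n q k _ (-1) 7 hn hk (by omega) (by omega)]
  interval_cases k <;> simp [cell]

lemma quasi_neg_two (n : ℕ) : quasi n (-2) = 0 := by
  obtain ⟨q, k, hk, hn⟩ : ∃ q k, k < 4 ∧ n = 4 * q + k := ⟨n / 4, n % 4, by omega, by omega⟩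
  rw [quasi_eq n q k _ (-1) 6 hn hk (by omega) (by omega)]
  interval_cases k <;> simp [cell]

/-- The coefficient of `V_j` in the `n`-th orthogonal polynomial. -/
def opCoeff (j n : ℕ) : ℚ := if j ≤ n then quasi n ((n : ℤ) - j) else 0

lemma opCoeff_eq (j n : ℕ) (h : j ≤ n + 2) : opCoeff j n = quasi n ((n : ℤ) - j) := by
  unfold opCoeff
  split_ifs with h1
  · rfl
  · obtain rfl | rfl : j = n + 1 ∨ j = n + 2 := by omega
    · rw [← quasi_neg_one n]; congr 1; push_cast; ring
    · rw [← quasi_neg_two n]; congr 1; push_cast; ring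

/-! ### Orthogonality -/

/-- A row of `gram` applied to a finitely supported vector `f`, given an extension `F` of `f` to
`ℤ` symmetric about `-1/2` (only the three nearest negative positions matter). -/
lemma gram_row (f : ℕ → ℚ) (F : ℤ → ℚ) (N i : ℕ) (hf : ∀ j, N ≤ j → f j = 0)
    (hF : ∀ j : ℕ, j < i → F j = f j) (hF1 : F (-1) = f 0) (hF2 : F (-2) = f 1)
    (hF3 : F (-3) = f 2) :
    ∑ j ∈ range N, gram i j * f j =
      F (i - 1) + 2 * F (i - 2) + F (i - 3) + f (i + 1) + 2 * f (i + 2) + f (i + 3) := by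
  have ev : ∀ c : ℕ, ∑ j ∈ range N, (if j = c then 1 else 0) * f j = f c := by
    intro c
    simp only [ite_mul, one_mul, zero_mul, sum_ite_eq', mem_range]
    split_ifs with h
    · rfl
    · exact (hf c (by omega)).symm
  rcases i with _ | _ | _ | i
  · have hg : ∀ j, gram 0 j = (if j = 0 then 1 else 0) + 3 * ((if j = 1 then 1 else 0))
        + 3 * ((if j = 2 then 1 else 0)) + (if j = 3 then 1 else 0) := by
      intro j
      rcases j with _ | _ | _ | _ | j <;> norm_num [gram]
      split_ifs <;> first | omega | norm_num
    have : ∀ j, gram 0 j * f j = (if j = 0 then 1 else 0) * f j + 3 * ((if j = 1 then 1 else 0) * f j)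
        + 3 * ((if j = 2 then 1 else 0) * f j) + (if j = 3 then 1 else 0) * f j := by
      intro j
      rw [hg]
      ring
    simp only [this, sum_add_distrib, ← mul_sum, ev]
    norm_num [hF1, hF2, hF3]
    ring
  · have hg : ∀ j, gram 1 j = 3 * ((if j = 0 then 1 else 0))
        + ((if j = 1 then 1 else 0)) + ((if j = 2 then 1 else 0))
        + 2 * ((if j = 3 then 1 else 0)) + (if j = 4 then 1 else 0) := by
      intro j
      rcases j with _ | _ | _ | _ | _ | j <;> norm_num [gram] <;> omega
    have : ∀ j, gram 1 j * f j = 3 * ((if j = 0 then 1 else 0) * f j)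
        + ((if j = 1 then 1 else 0) * f j) + ((if j = 2 then 1 else 0) * f j)
        + 2 * ((if j = 3 then 1 else 0) * f j) + (if j = 4 then 1 else 0) * f j := by
      intro j
      rw [hg]
      ring
    simp only [this, sum_add_distrib, ← mul_sum, ev]
    have := hF 0 (by omega)
    norm_num at this
    norm_num [hF1, hF2, hF3, this]
    ring
  · have hg : ∀ j, gram 2 j = 3 * ((if j = 0 then 1 else 0))
        + ((if j = 1 then 1 else 0)) + ((if j = 3 then 1 else 0))
        + 2 * ((if j = 4 then 1 else 0)) + (if j = 5 then 1 else 0) := by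
      intro j
      rcases j with _ | _ | _ | _ | _ | _ | j <;> norm_num [gram] <;> omega
    have : ∀ j, gram 2 j * f j = 3 * ((if j = 0 then 1 else 0) * f j)
        + ((if j = 1 then 1 else 0) * f j) + ((if j = 3 then 1 else 0) * f j)
        + 2 * ((if j = 4 then 1 else 0) * f j) + (if j = 5 then 1 else 0) * f j := by
      intro j
      rw [hg]
      ring
    simp only [this, sum_add_distrib, ← mul_sum, ev]
    have h0 := hF 0 (by omega)
    have h1 := hF 1 (by omega)
    norm_num at h0 h1
    norm_num [hF1, hF2, hF3, h0, h1]
    ring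
  · have : ∀ j, gram (i + 3) j * f j = (if j = i + 2 then 1 else 0) * f j
        + 2 * ((if j = i + 1 then 1 else 0) * f j) + (if j = i then 1 else 0) * f j
        + (if j = i + 4 then 1 else 0) * f j
        + 2 * ((if j = i + 5 then 1 else 0) * f j) + (if j = i + 6 then 1 else 0) * f j := by
      intro j
      unfold gram
      have e1 : (i + 3 = j + 1) = (j = i + 2) := by apply propext; omega
      have e2 : (i + 3 = j + 2) = (j = i + 1) := by apply propext; omega
      have e3 : (i + 3 = j + 3) = (j = i) := by apply propext; omega
      have e4 : (i + 3 + j = 0) = False := by simp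
      have e5 : (i + 3 + j = 1) = False := by simp; omega
      have e6 : (i + 3 + j = 2) = False := by simp; omega
      simp only [e1, e2, e3, e4, e5, e6, if_false]
      ring
    simp only [this, sum_add_distrib, ← mul_sum, ev]
    rw [← hF i (by omega), ← hF (i + 1) (by omega), ← hF (i + 2) (by omega)]
    push_cast
    ring_nf

/-- Orthogonality: `gram * U` is lower triangular, with diagonal `-quasi n (-3)`. -/
lemma gram_mul_opCoeff (N i n : ℕ) (hn : n < N) (hi : i ≤ n) :
    ∑ j ∈ range N, gram i j * opCoeff j n = if i = n then -quasi n (-3) else 0 := by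
  obtain ⟨s1, s2, s3⟩ := quasi_symm n
  rw [gram_row (fun j => opCoeff j n) (fun j => quasi n (n - j)) N i]
  · have hr := quasi_rec n ((n : ℤ) - i)
    rw [opCoeff_eq (i + 1) n (by omega), opCoeff_eq (i + 2) n (by omega)]
    split_ifs with h
    · subst h
      have h3 : opCoeff (i + 3) i = 0 := by simp [opCoeff]
      rw [h3]
      push_cast
      ring_nf at hr ⊢
      linarith
    · rw [opCoeff_eq (i + 3) n (by omega), ← hr]
      push_cast
      ring_nf
  · intro j hj
    simp only [opCoeff]
    rw [if_neg (by omega)]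
  · intro j hj
    exact (opCoeff_eq j n (by omega)).symm
  · rw [opCoeff_eq 0 n (by omega)]
    simpa using s1
  · rw [opCoeff_eq 1 n (by omega)]
    simpa using s2
  · rw [opCoeff_eq 2 n (by omega)]
    simpa using s3

/-! ### Determinants -/

/-- `-quasi i (-3)` is the squared norm of the `i`-th monic orthogonal polynomial. -/
lemma hankel_eq_prod (n : ℕ) :
    (hankel (centralSeq 4) n : ℚ) = ∏ i ∈ range n, -quasi i (-3) := by
  let B : Matrix (Fin n) (Fin n) ℚ := Matrix.of fun i m => vCoeff i m
  let M : Matrix (Fin n) (Fin n) ℚ := Matrix.of fun m l => gram m l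
  let U : Matrix (Fin n) (Fin n) ℚ := Matrix.of fun j k => opCoeff j k
  have hB : B.det = 1 := by
    rw [Matrix.det_of_isLowerTriangular]
    · apply prod_eq_one
      intro i _
      simp only [B, Matrix.of_apply, vCoeff]
      rw [show (i : ℕ) + 1 + i = 2 * i + 1 by ring]
      simp
    · intro i j hij
      have : (i : ℕ) < j := hij
      simp only [B, Matrix.of_apply, vCoeff]
      rw [Nat.choose_eq_zero_of_lt (by omega)]; simp
  have hU : U.det = 1 := by
    rw [Matrix.det_of_isUpperTriangular]
    · apply prod_eq_one
      intro i _
      simp [U, opCoeff, quasi_zero]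
    · intro i j hij
      have : (j : ℕ) < i := hij
      simp only [U, Matrix.of_apply, opCoeff]
      rw [if_neg (by omega)]
  have hMU : ∀ i k : Fin n, i ≤ k → (M * U) i k = if i = k then -quasi k (-3) else 0 := by
    intro i k hik
    rw [Matrix.mul_apply]
    simp only [M, U, Matrix.of_apply]
    rw [Fin.sum_univ_eq_sum_range (fun j => gram i j * opCoeff j k) n,
      gram_mul_opCoeff n i k k.2 hik]
    simp [Fin.ext_iff]
  have hM : M.det = ∏ i ∈ range n, -quasi i (-3) := by
    have h1 : (M * U).det = M.det := by rw [Matrix.det_mul, hU, mul_one]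
    rw [← h1, Matrix.det_of_isLowerTriangular,
      ← Fin.prod_univ_eq_prod_range (fun i => -quasi i (-3)) n]
    · apply prod_congr rfl
      intro i _
      rw [hMU i i le_rfl, if_pos rfl]
    · intro i j hij
      have hij' : i < j := hij
      rw [hMU i j hij'.le, if_neg hij'.ne]
  have hA : (Matrix.of fun i j : Fin n => centralSeq 4 (i.val + j.val)).map (Int.castRingHom ℚ)
      = B * M * B.transpose := by
    ext i j
    simp only [Matrix.map_apply, Matrix.of_apply, Matrix.mul_apply, Matrix.transpose_apply, B, M,
      eq_intCast]
    rw [hankel_factor i j n i.2 j.2, ← Fin.sum_univ_eq_sum_range]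
    apply sum_congr rfl
    intro l _
    rw [← Fin.sum_univ_eq_sum_range (fun m => vCoeff i m * gram m l)]
  have h2 : (hankel (centralSeq 4) n : ℚ) = (B * M * B.transpose).det := by
    rw [← hA, hankel, ← eq_intCast (Int.castRingHom ℚ), RingHom.map_det]
    rfl
  rw [h2, Matrix.det_mul, Matrix.det_mul, Matrix.det_transpose, hB, hM]
  ring

lemma norm_cells (n : ℕ) : -quasi (4 * n) (-3) = 1 ∧ -quasi (4 * n + 1) (-3) = -8 * (n + 1) ∧
    -quasi (4 * n + 2) (-3) = -1 ∧ -quasi (4 * n + 3) (-3) = 1 / (8 * (n + 1)) := by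
  rw [quasi_eq (4 * n) n 0 (-3) (-1) 5 (by omega) (by omega) (by omega) (by omega),
    quasi_eq (4 * n + 1) n 1 (-3) (-1) 5 (by omega) (by omega) (by omega) (by omega),
    quasi_eq (4 * n + 2) n 2 (-3) (-1) 5 (by omega) (by omega) (by omega) (by omega),
    quasi_eq (4 * n + 3) n 3 (-3) (-1) 5 (by omega) (by omega) (by omega) (by omega)]
  refine ⟨?_, ?_, ?_, ?_⟩ <;> simp only [cell] <;> push_cast <;> ring

theorem hankel_centralSeq_four (n : ℕ) :
    hankel (centralSeq 4) (4 * n) = 1 ∧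
    hankel (centralSeq 4) (4 * n + 1) = 1 ∧
    hankel (centralSeq 4) (4 * n + 2) = -8 * (n + 1) ∧
    hankel (centralSeq 4) (4 * n + 3) = 8 * (n + 1) := by
  have h0 : ∀ n : ℕ, ∏ i ∈ range (4 * n), -quasi i (-3) = 1 := by
    intro n
    induction n with
    | zero => simp
    | succ n ih =>
      obtain ⟨a, b, c, d⟩ := norm_cells n
      rw [show 4 * (n + 1) = 4 * n + 1 + 1 + 1 + 1 by ring, prod_range_succ, prod_range_succ,
        prod_range_succ, prod_range_succ, ih, a, b, c, d]
      have : (n : ℚ) + 1 ≠ 0 := by positivity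
      field_simp
  obtain ⟨a, b, c, d⟩ := norm_cells n
  have h1 : ∏ i ∈ range (4 * n + 1), -quasi i (-3) = 1 := by
    rw [prod_range_succ, h0, a, one_mul]
  have h2 : ∏ i ∈ range (4 * n + 2), -quasi i (-3) = -8 * (n + 1) := by
    rw [prod_range_succ, h1, b, one_mul]
  have h3 : ∏ i ∈ range (4 * n + 3), -quasi i (-3) = 8 * (n + 1) := by
    rw [prod_range_succ, h2, c]; ring
  refine ⟨?_, ?_, ?_, ?_⟩
  · have := hankel_eq_prod (4 * n)
    rw [h0] at this
    exact_mod_cast this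
  · have := hankel_eq_prod (4 * n + 1)
    rw [h1] at this
    exact_mod_cast this
  · have := hankel_eq_prod (4 * n + 2)
    rw [h2] at this
    exact_mod_cast this
  · have := hankel_eq_prod (4 * n + 3)
    rw [h3] at this
    exact_mod_cast this
end

section
/- For every natural number n: H_{5n}(G(x,5)) = (2n+1)^2, H_{5n+1}(G(x,5)) = (2n+1)^2, H_{5n+2}(G(x,5)) = −(1/3)·(50n^2+89n+39)(2n+1), H_{5n+3}(G(x,5)) = −16(n+1)^2, and H_{5n+4}(G(x,5)) = (1/3)·(100n^2+272n+183)(n+1). -/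
open Finset

/-! ### Factoring out the Chebyshev part of the Hankel matrix -/

/-- The coefficient `binom(2i+5, i-k)` of `w ^ k` in the Laurent polynomial
`w⁻ⁱ⁻⁵ (1 + w) ^ (2i+5)`, to which the coefficient `binom(2i+5, i+k)` of `w ^ (-k)` is added when
`k ≠ 0`. The first is written as `binom(2i+5, i+5+k)` to avoid truncated subtraction for `k > i`. -/
def rowCoeff (i k : ℕ) : ℤ :=
  ((2 * i + 5).choose (i + 5 + k) : ℤ) + if k = 0 then 0 else ((2 * i + 5).choose (i + k) : ℤ)

/-- For even `f`, a sum against `rowCoeff i` is the unfolded two-sided binomial sum; `i + 6 ≤ N`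
ensures that all nonzero terms are present. -/
theorem sum_rowCoeff (f : ℤ → ℤ) (hf : ∀ k, f (-k) = f k) (i N : ℕ) (hN : i + 6 ≤ N) :
    ∑ k ∈ range N, rowCoeff i k * f k =
      ∑ s ∈ range (2 * i + 6), ((2 * i + 5).choose s : ℤ) * f ((i : ℤ) - s) := by
  have h1 : ∑ s ∈ range (2 * i + 6), ((2 * i + 5).choose s : ℤ) * f ((i : ℤ) - s) =
      ∑ k ∈ range (i + 1), ((2 * i + 5).choose (i + 5 + k) : ℤ) * f k +
      ∑ k ∈ range (i + 5), ((2 * i + 5).choose (i + (k + 1)) : ℤ) * f (k + 1 : ℕ) := by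
    rw [show 2 * i + 6 = (i + 1) + (i + 5) by ring, sum_range_add]
    congr 1
    · rw [← sum_range_reflect]
      refine sum_congr rfl fun k hk => ?_
      have hk' : k ≤ i := by simpa [Nat.lt_succ_iff] using hk
      have e1 : i + 1 - 1 - k = i - k := by omega
      rw [e1, ← Nat.choose_symm (n := 2 * i + 5) (k := i - k) (by omega)]
      congr 2
      · congr 1; omega
      · push_cast [hk']; ring
    · refine sum_congr rfl fun k _ => ?_
      rw [← hf ((k + 1 : ℕ) : ℤ), show i + 1 + k = i + (k + 1) by ring]
      congr 2; push_cast; ring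
  have h2 : ∑ k ∈ range N, ((2 * i + 5).choose (i + 5 + k) : ℤ) * f k =
      ∑ k ∈ range (i + 1), ((2 * i + 5).choose (i + 5 + k) : ℤ) * f k := by
    symm
    apply sum_subset (range_subset_range.2 (by omega))
    intro k _ hk
    rw [mem_range, not_lt] at hk
    rw [Nat.choose_eq_zero_of_lt (by omega)]; simp
  have h3 : ∑ k ∈ range N, (if k = 0 then 0 else ((2 * i + 5).choose (i + k) : ℤ)) * f k =
      ∑ k ∈ range (i + 5), ((2 * i + 5).choose (i + (k + 1)) : ℤ) * f (k + 1 : ℕ) := by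
    obtain ⟨N, rfl⟩ : ∃ N', N = N' + 1 := ⟨N - 1, by omega⟩
    rw [sum_range_succ']
    simp only [Nat.add_eq_zero_iff, one_ne_zero, and_false, if_false, if_true, zero_mul, add_zero]
    symm
    apply sum_subset (range_subset_range.2 (by omega))
    intro k _ hk
    rw [mem_range, not_lt] at hk
    rw [Nat.choose_eq_zero_of_lt (by omega)]; simp
  rw [h1, ← h2, ← h3, ← sum_add_distrib]
  simp only [rowCoeff, add_mul]

/-- Vandermonde's identity, with the second binomial re-indexed from its centre so that it is an
even function of `i - s`. -/
theorem vandermonde_centered (i j : ℕ) :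
    ∑ s ∈ range (2 * i + 6), ((2 * i + 5).choose s : ℤ) *
      ((2 * j).choose (j + ((i : ℤ) - s).natAbs) : ℤ) = centralSeq 5 (i + j) := by
  have h0 : (2 * (i + j) + 5).choose (i + j) =
      ∑ s ∈ range (i + j + 1), (2 * i + 5).choose s * (2 * j).choose (i + j - s) := by
    rw [show 2 * (i + j) + 5 = (2 * i + 5) + 2 * j by ring, Nat.add_choose_eq,
      Nat.sum_antidiagonal_eq_sum_range_succ_mk]
  unfold centralSeq
  rw [h0]
  push_cast
  have h1 : ∑ s ∈ range (i + j + 1), ((2 * i + 5).choose s : ℤ) * ((2 * j).choose (i + j - s) : ℤ)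
      = ∑ s ∈ range (i + j + 1), ((2 * i + 5).choose s : ℤ) *
      ((2 * j).choose (j + ((i : ℤ) - s).natAbs) : ℤ) := by
    refine sum_congr rfl fun s hs => ?_
    rw [mem_range] at hs
    congr 2
    rcases le_total s i with h | h
    · congr 1; omega
    · rw [← Nat.choose_symm (by omega)]; congr 1; omega
  rw [h1]
  trans ∑ s ∈ range (i + j + 1 + (2 * i + 6)), ((2 * i + 5).choose s : ℤ) *
      ((2 * j).choose (j + ((i : ℤ) - s).natAbs) : ℤ)
  · apply sum_subset (range_subset_range.2 (by omega))
    intro s _ hs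
    rw [mem_range, not_lt] at hs
    rw [Nat.choose_eq_zero_of_lt (by omega)]; simp
  · symm
    apply sum_subset (range_subset_range.2 (by omega))
    intro s _ hs
    rw [mem_range, not_lt] at hs
    rw [Nat.choose_eq_zero_of_lt (n := 2 * j) (by omega)]; simp

/-- The Hankel matrix is `(rowCoeff i k)` times the upper unitriangular matrix
`(binom(2j, j+k))`. -/
theorem hankel_eq_det_rowCoeff (n : ℕ) :
    hankel (centralSeq 5) n = (Matrix.of fun i k : Fin n => rowCoeff i k).det := by
  have hU : (Matrix.of fun k j : Fin n => ((2 * (j : ℕ)).choose (j + k) : ℤ)).det = 1 := by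
    rw [Matrix.det_of_isUpperTriangular]
    · exact prod_eq_one fun i _ => by simp [← two_mul]
    · intro k j (h : j < k)
      simp only [Matrix.of_apply]
      rw [Nat.choose_eq_zero_of_lt (by have : (j : ℕ) < k := h; omega)]; rfl
  rw [← mul_one (Matrix.det _), ← hU, ← Matrix.det_mul, hankel]
  congr 1
  ext i j
  rw [Matrix.mul_apply]
  simp only [Matrix.of_apply]
  rw [← vandermonde_centered, ← sum_rowCoeff (fun k => ((2 * (j : ℕ)).choose (j + k.natAbs) : ℤ))
    (fun k => by simp) i (n + 6) (by omega),
    Fin.sum_univ_eq_sum_range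
      (fun k => rowCoeff i k * ((2 * (j : ℕ)).choose (j + k) : ℤ)) n]
  simp only [Int.natAbs_natCast]
  symm
  apply sum_subset (range_subset_range.2 (by omega))
  intro s _ hs
  rw [mem_range, not_lt] at hs
  rw [Nat.choose_eq_zero_of_lt (n := 2 * (j : ℕ)) (by omega)]; simp

/-! ### Five sequences annihilated by the band matrix -/

/-- Five even functions of `k` which, after multiplication by `(-1) ^ k`, are annihilated by every
row `rowCoeff i`: the indicators of the classes `0`, `±1`, `±2` modulo `5`, and `k²`, `k⁴`. -/
def kernelFun (k : ℤ) : Fin 5 → ℤ :=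
  ![if k % 5 = 0 then 1 else 0, if k % 5 = 1 ∨ k % 5 = 4 then 1 else 0,
    if k % 5 = 2 ∨ k % 5 = 3 then 1 else 0, k ^ 2, k ^ 4]

theorem kernelFun_neg (k : ℤ) (m : Fin 5) : kernelFun (-k) m = kernelFun k m := by
  fin_cases m
  · simp only [kernelFun]; simp
  · simp only [kernelFun, Fin.mk_one, Matrix.cons_val]
    congr 1; apply propext; omega
  · simp only [kernelFun, Fin.reduceFinMk, Matrix.cons_val]
    congr 1; apply propext; omega
  · simp [kernelFun]
  · simp only [kernelFun, Fin.reduceFinMk, Matrix.cons_val]; ring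

/-- If `g` is even and `5`-periodic, the substitution `s ↦ 2i+5-s` changes the sign of the sum,
because it sends `i - s` to `-(i - s) - 5`. -/
theorem sum_choose_antiperiodic (g : ℤ → ℤ) (hg : ∀ k, g (-k) = g k)
    (hg5 : ∀ k, g (k - 5) = g k) (i : ℕ) :
    ∑ s ∈ range (2 * i + 6), ((2 * i + 5).choose s : ℤ) *
      ((((i : ℤ) - s).negOnePow : ℤ) * g ((i : ℤ) - s)) = 0 := by
  set S := ∑ s ∈ range (2 * i + 6), ((2 * i + 5).choose s : ℤ) *
      ((((i : ℤ) - s).negOnePow : ℤ) * g ((i : ℤ) - s)) with hS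
  have : S = -S := by
    conv_lhs => rw [hS, ← sum_range_reflect]
    rw [hS, ← sum_neg_distrib]
    refine sum_congr rfl fun s hs => ?_
    rw [mem_range] at hs
    have e : (i : ℤ) - ((2 * i + 6 - 1 - s : ℕ) : ℤ) = -((i : ℤ) - s) - 5 := by omega
    rw [e, hg5, hg, Int.negOnePow_sub, Int.negOnePow_neg,
      show 2 * i + 6 - 1 - s = 2 * i + 5 - s by omega, Nat.choose_symm (by omega)]
    rw [Int.negOnePow_odd 5 (by decide)]
    push_cast; ring
  omega

/-- A finite difference of order `2i+5 > p` of a polynomial of degree `p` vanishes. -/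
theorem sum_choose_pow (p : ℕ) (hp : p < 5) (he : Even p) (i : ℕ) :
    ∑ s ∈ range (2 * i + 6), ((2 * i + 5).choose s : ℤ) *
      ((((i : ℤ) - s).negOnePow : ℤ) * ((i : ℤ) - s) ^ p) = 0 := by
  have h := congrFun (fwdDiff_iter_pow_eq_zero_of_lt (R := ℤ) (j := p) (n := 2 * i + 5)
    (by omega)) (-(i : ℤ))
  rw [fwdDiff_iter_eq_sum_shift] at h
  rw [Pi.zero_apply] at h
  have h2 : ∑ s ∈ range (2 * i + 6), ((2 * i + 5).choose s : ℤ) *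
      ((((i : ℤ) - s).negOnePow : ℤ) * ((i : ℤ) - s) ^ p) = (-1) ^ (i + 5) * 0 := by
    rw [← h, mul_sum]
    refine sum_congr rfl fun s hs => ?_
    rw [mem_range] at hs
    have e1 : ((((i : ℤ) - s).negOnePow : ℤˣ) : ℤ) = (-1) ^ (i + 5) * (-1) ^ (2 * i + 5 - s) := by
      rw [← pow_add]
      have : (i : ℤ) - s = ((i + 5 + (2 * i + 5 - s) : ℕ) : ℤ) - 2 * (i + 5) := by omega
      rw [this, Int.negOnePow_sub, Int.negOnePow_two_mul, mul_one, Int.negOnePow_def, zpow_natCast]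
      simp
    have e2 : ((i : ℤ) - s) ^ p = (-(i : ℤ) + s • (1 : ℤ)) ^ p := by
      rw [← he.neg_pow]; congr 1; simp; ring
    rw [e1, e2, smul_eq_mul]; ring
  simpa using h2

theorem rowCoeff_kernelFun (m : Fin 5) (i N : ℕ) (hN : i + 6 ≤ N) :
    ∑ k ∈ range N, rowCoeff i k * (((k : ℤ).negOnePow : ℤ) * kernelFun k m) = 0 := by
  rw [sum_rowCoeff (fun k => ((k.negOnePow : ℤ) * kernelFun k m))
    (fun k => by rw [Int.negOnePow_neg, kernelFun_neg]) i N hN]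
  have hlow : m.val < 3 → ∀ k, kernelFun (k - 5) m = kernelFun k m := by
    intro hm k
    fin_cases m
    · simp [kernelFun]
    · simp [kernelFun]
    · simp [kernelFun]
    · simp at hm
    · simp at hm
  by_cases hm : m.val < 3
  · exact sum_choose_antiperiodic (fun k => kernelFun k m) (fun k => kernelFun_neg k m)
      (hlow hm) i
  · fin_cases m
    · simp at hm
    · simp at hm
    · simp at hm
    · exact sum_choose_pow 2 (by norm_num) (by decide) i
    · exact sum_choose_pow 4 (by norm_num) (by decide) i

/-! ### Reduction to a determinant of order five -/

/-- The matrix of the values of the five functions `kernelFun` at `n, …, n + 4`. -/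
def window (n : ℤ) : Matrix (Fin 5) (Fin 5) ℤ := Matrix.of fun j m => kernelFun (n + (j : ℕ)) m

/-- The rows `rowCoeff 0, …, rowCoeff (n-1)`, truncated to their first `n + 5` entries, placed
below the first five unit vectors. The result is lower unitriangular, since the last nonzero entry
of `rowCoeff i` is a `1` in column `i + 5`. -/
def bandMatrix (n : ℕ) : Matrix (Fin (n + 5)) (Fin (n + 5)) ℤ :=
  Matrix.of fun r c => if (r : ℕ) < 5 then (if r = c then 1 else 0) else rowCoeff (r - 5) c

theorem bandMatrix_of_lt {n : ℕ} {r c : Fin (n + 5)} (h : (r : ℕ) < 5) :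
    bandMatrix n r c = if r = c then 1 else 0 := if_pos h

theorem bandMatrix_of_ge {n : ℕ} {r c : Fin (n + 5)} (h : ¬ (r : ℕ) < 5) :
    bandMatrix n r c = rowCoeff (r - 5) c := if_neg h

theorem det_bandMatrix (n : ℕ) : (bandMatrix n).det = 1 := by
  rw [Matrix.det_of_isLowerTriangular]
  · refine prod_eq_one fun r _ => ?_
    simp only [bandMatrix, Matrix.of_apply]
    split_ifs with h
    · rfl
    · rw [rowCoeff, if_neg (by omega), Nat.choose_eq_zero_of_lt (by omega),
        show (r : ℕ) - 5 + r = 2 * (r - 5) + 5 by omega]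
      simp
  · intro r c (h : r < c)
    have h' : (r : ℕ) < c := h
    simp only [bandMatrix, Matrix.of_apply]
    split_ifs with h1 h2
    · omega
    · rfl
    · rw [rowCoeff, if_neg (by omega), Nat.choose_eq_zero_of_lt (by omega),
        Nat.choose_eq_zero_of_lt (by omega)]
      simp

theorem finRotate_pow_apply (N k : ℕ) (i : Fin (N + 1)) :
    ((finRotate (N + 1) ^ k) i : ℕ) = (i + k) % (N + 1) := by
  induction k with
  | zero => simp [Nat.mod_eq_of_lt i.2]
  | succ k ih =>
    rw [pow_succ', Equiv.Perm.mul_apply, finRotate_apply, Fin.val_add, ih]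
    simp [add_assoc]

/-- Moving the five unit rows to the bottom multiplies the determinant by
`(-1) ^ (5 (n + 4)) = (-1) ^ n`. -/
theorem det_rotated (n : ℕ) :
    (((bandMatrix n).submatrix (finRotate (n + 5) ^ 5 : Equiv.Perm _) id).submatrix
      finSumFinEquiv finSumFinEquiv).det = (-1) ^ n := by
  rw [Matrix.det_submatrix_equiv_self, Matrix.det_permute, det_bandMatrix, map_pow, sign_finRotate]
  rw [show n + 5 - 1 = n + 4 by omega, ← pow_mul, show (n + 4) * 5 = n + 2 * (2 * n + 10) by ring,
    pow_add, pow_mul]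
  simp

/-- The reduction of the Hankel determinant of order `n` to a quotient of determinants of order
`5`, by multiplying the band matrix by a block matrix whose last columns lie in the kernel of the
rows `rowCoeff i`. -/
theorem hankel_mul_window (n : ℕ) :
    hankel (centralSeq 5) n * (window 0).det = (window n).det := by
  let X : Matrix (Fin n ⊕ Fin 5) (Fin n ⊕ Fin 5) ℤ :=
    ((bandMatrix n).submatrix (finRotate (n + 5) ^ 5 : Equiv.Perm _) id).submatrix
      finSumFinEquiv finSumFinEquiv
  let R : ℕ → Fin 5 → ℤ := fun k m => ((k : ℤ).negOnePow : ℤ) * kernelFun k m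
  let Rtop : Matrix (Fin n) (Fin 5) ℤ := Matrix.of fun i m => R i m
  let Rbot : Matrix (Fin 5) (Fin 5) ℤ := Matrix.of fun j m => R (n + j) m
  let R0 : Matrix (Fin 5) (Fin 5) ℤ := Matrix.of fun j m => R j m
  have hrow1 : ∀ (i : Fin n) c, X (Sum.inl i) c = rowCoeff i (finSumFinEquiv c) := by
    intro i c
    have h : (((finRotate (n + 5) ^ 5 : Equiv.Perm _) (finSumFinEquiv (Sum.inl i)) : Fin (n + 5))
        : ℕ) = i + 5 := by
      rw [finRotate_pow_apply, finSumFinEquiv_apply_left, Fin.val_castAdd,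
        Nat.mod_eq_of_lt (by omega)]
    simp only [X, Matrix.submatrix_apply, id]
    rw [bandMatrix_of_ge (by rw [h]; omega), h, Nat.add_sub_cancel]
  have hrow2 : ∀ (j : Fin 5) c, X (Sum.inr j) c =
      if (j : ℕ) = (finSumFinEquiv c : Fin (n + 5)) then 1 else 0 := by
    intro j c
    have h : (((finRotate (n + 5) ^ 5 : Equiv.Perm _) (finSumFinEquiv (Sum.inr j)) : Fin (n + 5))
        : ℕ) = j := by
      rw [finRotate_pow_apply, finSumFinEquiv_apply_right, Fin.val_natAdd,
        show n + (j : ℕ) + 5 = j + (n + 4 + 1) by ring, Nat.add_mod_right,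
        Nat.mod_eq_of_lt (by omega)]
    simp only [X, Matrix.submatrix_apply, id]
    rw [bandMatrix_of_lt (by rw [h]; omega)]
    simp only [Fin.ext_iff, h]
  let Y : Matrix (Fin n ⊕ Fin 5) (Fin n ⊕ Fin 5) ℤ := Matrix.fromBlocks 1 Rtop 0 Rbot
  have hR : ∀ r m, ∑ c, X r c * Y c (Sum.inr m) =
      Sum.elim (fun _ => 0) (fun j : Fin 5 => R j m) r := by
    intro r m
    have e : ∀ c, Y c (Sum.inr m) =
        R (finSumFinEquiv c : Fin (n + 5)) m := by
      rintro (i | j) <;> simp [Y, Rtop, Rbot]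
    simp only [e]
    rcases r with i | j
    · simp only [hrow1]
      rw [finSumFinEquiv.sum_comp (fun c : Fin (n + 5) => rowCoeff i c * R c m),
        Fin.sum_univ_eq_sum_range (fun c => rowCoeff i c * R c m)]
      exact rowCoeff_kernelFun m i (n + 5) (by omega)
    · simp only [hrow2]
      rw [finSumFinEquiv.sum_comp
        (fun c : Fin (n + 5) => (if (j : ℕ) = c then 1 else 0) * R c m),
        Fin.sum_univ_eq_sum_range (fun c => (if (j : ℕ) = c then 1 else 0) * R c m)]
      simp only [ite_mul, one_mul, zero_mul, sum_ite_eq, mem_range]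
      rw [if_pos (by omega)]
      rfl
  -- The lower right block holds the values at `0, …, 4`, and the block above it vanishes.
  have hmul : X * Y =
      Matrix.fromBlocks (Matrix.of fun i k : Fin n => rowCoeff i k) 0 X.toBlocks₂₁ R0 := by
    ext r c
    rcases c with k | m
    · rw [Matrix.mul_apply, Fintype.sum_sum_type]
      rcases r with i | j
      · simp [Y, Matrix.one_apply, hrow1]
      · simp [Y, Matrix.one_apply, Matrix.toBlocks₂₁]
    · rw [Matrix.mul_apply, hR]
      rcases r with i | j <;> simp [R0]
  have hdet := congrArg Matrix.det hmul
  rw [Matrix.det_mul, Matrix.det_fromBlocks_zero₂₁, Matrix.det_fromBlocks_zero₁₂, Matrix.det_one,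
    one_mul, ← hankel_eq_det_rowCoeff, det_rotated] at hdet
  -- The signs `(-1) ^ k` in the five rows of each window multiply to `(-1) ^ n` and to `1`.
  have hb : Rbot.det = (-1) ^ n * (window n).det := by
    have := Matrix.det_mul_column (fun j : Fin 5 => (((n + j : ℕ) : ℤ).negOnePow : ℤ)) (window n)
    have h2 : ∏ j : Fin 5, ((((n + j : ℕ) : ℤ).negOnePow : ℤˣ) : ℤ) = (-1) ^ n := by
      simp only [Int.negOnePow_def, zpow_natCast, Fin.prod_univ_five]
      push_cast
      rw [← pow_add, ← pow_add, ← pow_add, ← pow_add]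
      simp only [Fin.isValue, Fin.coe_ofNat_eq_mod, Nat.reduceMod]
      rw [show n + 0 + (n + 1) + (n + 2) + (n + 3) + (n + 4) = n + 2 * (2 * n + 5) by ring,
        pow_add, pow_mul]
      simp
    rw [h2] at this
    have hE : Rbot = Matrix.of fun (j m : Fin 5) =>
        (((n + j : ℕ) : ℤ).negOnePow : ℤ) * window n j m := by
      ext j m
      simp [Rbot, R, window]
    rw [hE, this]
  have h0 : R0.det = (window 0).det := by
    have := Matrix.det_mul_column (fun j : Fin 5 => (((j : ℕ) : ℤ).negOnePow : ℤ)) (window 0)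
    have h2 : ∏ j : Fin 5, ((((j : ℕ) : ℤ).negOnePow : ℤˣ) : ℤ) = 1 := by
      decide
    rw [h2, one_mul] at this
    have hE : R0 = Matrix.of fun (j m : Fin 5) => (((j : ℕ) : ℤ).negOnePow : ℤ) * window 0 j m := by
      ext j m
      simp [R0, R, window]
    rw [hE, this]
  rw [hb, h0, ← mul_assoc, ← mul_pow] at hdet
  simpa using hdet.symm

/-! ### Evaluation of the determinants of order five -/

theorem det_window_zero : (window 0).det = 300 := by
  decide +kernel

theorem window_eq (m r : ℕ) : window ((5 * m + r : ℕ) : ℤ) = Matrix.of fun (j k : Fin 5) =>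
    ![kernelFun (r + (j : ℕ)) 0, kernelFun (r + (j : ℕ)) 1, kernelFun (r + (j : ℕ)) 2,
      (5 * m + r + (j : ℕ)) ^ 2, (5 * m + r + (j : ℕ)) ^ 4] k := by
  have e : ∀ j : ℕ, (5 * (m : ℤ) + r + j) % 5 = ((r : ℤ) + j) % 5 := by omega
  ext j k
  fin_cases k <;> simp [window, kernelFun, e]

theorem hankel_of_window (m r : ℕ) (v : ℚ)
    (h : ((window ((5 * m + r : ℕ) : ℤ)).det : ℚ) = 300 * v) :
    (hankel (centralSeq 5) (5 * m + r) : ℚ) = v := by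
  have h1 := hankel_mul_window (5 * m + r)
  rw [det_window_zero] at h1
  have h2 : (hankel (centralSeq 5) (5 * m + r) : ℚ) * 300 = 300 * v := by
    rw [← h, ← h1]; push_cast; ring
  linarith

theorem hankel_centralSeq_five (n : ℕ) :
    (hankel (centralSeq 5) (5 * n) : ℚ) = (2 * n + 1) ^ 2 ∧
    (hankel (centralSeq 5) (5 * n + 1) : ℚ) = (2 * n + 1) ^ 2 ∧
    (hankel (centralSeq 5) (5 * n + 2) : ℚ) =
      -(1 / 3) * (50 * (n : ℚ) ^ 2 + 89 * n + 39) * (2 * n + 1) ∧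
    (hankel (centralSeq 5) (5 * n + 3) : ℚ) = -16 * (n + 1) ^ 2 ∧
    (hankel (centralSeq 5) (5 * n + 4) : ℚ) =
      1 / 3 * (100 * (n : ℚ) ^ 2 + 272 * n + 183) * (n + 1) := by
  refine ⟨hankel_of_window n 0 _ ?_, hankel_of_window n 1 _ ?_, hankel_of_window n 2 _ ?_,
    hankel_of_window n 3 _ ?_, hankel_of_window n 4 _ ?_⟩ <;>
  · rw [window_eq]
    simp [Matrix.det_succ_row_zero, Fin.sum_univ_succ, Fin.succAbove, kernelFun]
    ring
end

section
/- For every natural number n: H_{6n}(G(x,6)) = (-1)^n, H_{6n+1}(G(x,6)) = (-1)^n, H_{6n+2}(G(x,6)) = (-1)^n (n+1)(144n^2+72n−19), H_{6n+3}(G(x,6)) = (-1)^{n+1}·144(n+1)^2, H_{6n+4}(G(x,6)) = (-1)^n·144(n+1)^2, and H_{6n+5}(G(x,6)) = (-1)^n (n+1)(144n^2+504n+413). -/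
/-! ### Reduction to a banded matrix -/

/-- The coefficients `b_m` (`m ≥ 0`) of the even Laurent polynomial
`(z⁻² + 4z⁻¹ + 6 + 4z + z²)(z³ + z⁻³)`. -/
def symbCoeff : ℕ → ℤ
  | 1 => 1
  | 2 => 4
  | 3 => 6
  | 4 => 4
  | 5 => 1
  | _ => 0

lemma symbCoeff_of_six_le {m : ℕ} (h : 6 ≤ m) : symbCoeff m = 0 := by
  obtain ⟨k, rfl⟩ := Nat.exists_eq_add_of_le' h
  rfl

/-- The banded Toeplitz-plus-Hankel matrix `b_{|p-q|} + b_{p+q+1}`. The summand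
`(p - q) + (q - p)` with truncated subtraction is `|p - q|`. -/
def band (p q : ℕ) : ℤ := symbCoeff ((p - q) + (q - p)) + symbCoeff (p + q + 1)

lemma sum_range_eq_of_zero {f : ℕ → ℤ} {m n : ℕ} (h : m ≤ n) (hf : ∀ x, m ≤ x → f x = 0) :
    ∑ x ∈ Finset.range n, f x = ∑ x ∈ Finset.range m, f x := by
  symm
  apply Finset.sum_subset (Finset.range_mono h)
  intro x _ hx
  exact hf x (by simpa using hx)

lemma choose_add_four (m k : ℕ) : (m + 4).choose (k + 4) =
    m.choose k + 4 * m.choose (k + 1) + 6 * m.choose (k + 2) + 4 * m.choose (k + 3)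
      + m.choose (k + 4) := by
  simp only [Nat.choose_succ_succ', show m + 4 = m + 1 + 1 + 1 + 1 from rfl]
  ring

/-- Entries of the product of the binomial matrix `C(2i+1, i+1+p)` with `band`. -/
def half (i q : ℕ) : ℤ := (2 * i + 5).choose (i + q) + (2 * i + 5).choose (i + 6 + q)

/-- The Vandermonde convolution for `C(2i+2j+6, i+j)`, folded at the middle of row `2j+1`. -/
lemma half_mul (i j n : ℕ) (hj : j < n) :
    ∑ q ∈ Finset.range n, half i q * ((2 * j + 1).choose (j + 1 + q) : ℤ)
      = centralSeq 6 (i + j) := by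
  have hV : (2 * (i + j) + 6).choose (i + j) =
      ∑ a ∈ Finset.range (j + 1 + i), (2 * j + 1).choose a * (2 * i + 5).choose (i + j - a) := by
    rw [show 2 * (i + j) + 6 = (2 * j + 1) + (2 * i + 5) by ring, Nat.add_choose_eq,
      Finset.Nat.sum_antidiagonal_eq_sum_range_succ_mk]
    congr 2
    omega
  have h1 : ∑ q ∈ Finset.range n,
      ((2 * i + 5).choose (i + q) : ℤ) * ((2 * j + 1).choose (j + 1 + q) : ℤ)
      = ∑ a ∈ Finset.range (j + 1),
        ((2 * j + 1).choose a : ℤ) * ((2 * i + 5).choose (i + j - a) : ℤ) := by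
    rw [sum_range_eq_of_zero (m := j + 1) (by omega), ← Finset.sum_range_reflect]
    · apply Finset.sum_congr rfl
      intro a ha
      have ha : a < j + 1 := by simpa using ha
      rw [Nat.choose_symm_of_eq_add (show 2 * j + 1 = (j + 1 + (j + 1 - 1 - a)) + a by omega),
        show i + (j + 1 - 1 - a) = i + j - a by omega, mul_comm]
    · intro x hx
      rw [Nat.choose_eq_zero_of_lt (n := 2 * j + 1) (by omega)]
      simp
  have h2 : ∑ q ∈ Finset.range n,
      ((2 * i + 5).choose (i + 6 + q) : ℤ) * ((2 * j + 1).choose (j + 1 + q) : ℤ)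
      = ∑ a ∈ Finset.range i, ((2 * j + 1).choose (j + 1 + a) : ℤ) *
          ((2 * i + 5).choose (i + j - (j + 1 + a)) : ℤ) := by
    rw [← sum_range_eq_of_zero (m := n) (n := n + i) (by omega),
      sum_range_eq_of_zero (m := i) (n := n + i) (by omega)]
    · apply Finset.sum_congr rfl
      intro a ha
      have ha : a < i := by simpa using ha
      rw [Nat.choose_symm_of_eq_add
        (show 2 * i + 5 = (i + 6 + a) + (i + j - (j + 1 + a)) by omega), mul_comm]
    · intro x hx
      rw [Nat.choose_eq_zero_of_lt (n := 2 * i + 5) (by omega)]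
      simp
    · intro x hx
      rw [Nat.choose_eq_zero_of_lt (n := 2 * j + 1) (by omega)]
      simp
  unfold centralSeq half
  rw [hV]
  push_cast
  rw [Finset.sum_range_add, ← h1, ← h2, ← Finset.sum_add_distrib]
  exact Finset.sum_congr rfl fun _ _ => by ring

/-- Multiplying by the symbol `(z⁻² + 4z⁻¹ + 6 + 4z + z²)(z³ + z⁻³)` is four applications of
Pascal's rule followed by a shift by `3` in both directions; for `q < 5` the shift crosses the
middle of row `2i+1` and has to be reflected. -/
lemma mul_band (i q n : ℕ) (hi : i < n) :
    ∑ p ∈ Finset.range n, ((2 * i + 1).choose (i + 1 + p) : ℤ) * band p q = half i q := by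
  rw [← sum_range_eq_of_zero (m := n) (n := n + (q + 6)) (by omega),
    sum_range_eq_of_zero (m := q + 6) (n := n + (q + 6)) (by omega)]
  · rcases Nat.lt_or_ge q 5 with hq | hq
    · rcases i with _ | i
      · interval_cases q <;> decide
      · -- Reflect the terms `C(2i+3, k)` with `k` left of the middle, so that only
        -- `C(2i+3, i+2), …` occur, then expand both summands of `half` by Pascal's rule.
        have s0 := Nat.choose_symm_of_eq_add (show 2 * i + 7 = (i + 1) + (i + 6) by omega)
        have s1 := Nat.choose_symm_of_eq_add (show 2 * i + 7 = (i + 2) + (i + 5) by omega)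
        have s2 := Nat.choose_symm_of_eq_add (show 2 * i + 7 = (i + 3) + (i + 4) by omega)
        have t0 := Nat.choose_symm_of_eq_add (show 2 * i + 3 = (i + 1) + (i + 2) by omega)
        have t1 := Nat.choose_symm_of_eq_add (show 2 * i + 3 = i + (i + 3) by omega)
        have c0 := choose_add_four (2 * i + 3) i
        have c1 := choose_add_four (2 * i + 3) (i + 1)
        have c2 := choose_add_four (2 * i + 3) (i + 2)
        have c3 := choose_add_four (2 * i + 3) (i + 3)
        have c4 := choose_add_four (2 * i + 3) (i + 4)
        have c5 := choose_add_four (2 * i + 3) (i + 5)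
        have c6 := choose_add_four (2 * i + 3) (i + 6)
        have c7 := choose_add_four (2 * i + 3) (i + 7)
        simp only [add_assoc, Nat.reduceAdd] at *
        unfold half
        rw [show 2 * (i + 1) + 5 = 2 * i + 7 by ring, show 2 * (i + 1) + 1 = 2 * i + 3 by ring]
        interval_cases q <;>
          simp only [Finset.sum_range_succ, Finset.sum_range_zero, band, symbCoeff, add_assoc,
            Nat.reduceAdd, Nat.reduceSub, add_zero, zero_add, s0, s1, s2, t0, t1, c0, c1, c2, c3,
            c4, c5, c6, c7] <;> push_cast <;> ring
    · obtain ⟨r, rfl⟩ := Nat.exists_eq_add_of_le' hq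
      rw [show r + 5 + 6 = r + 11 by ring, Finset.sum_range_add,
        Finset.sum_eq_zero, zero_add]
      · have e1 := choose_add_four (2 * i + 1) (i + r + 1)
        have e2 := choose_add_four (2 * i + 1) (i + r + 7)
        have hb : ∀ x, band (r + x) (r + 5) = symbCoeff ((x - 5) + (5 - x)) := by
          intro x
          unfold band
          rw [symbCoeff_of_six_le (m := r + x + (r + 5) + 1) (by omega), add_zero]
          congr 1
          omega
        simp only [hb, Finset.sum_range_succ, Finset.sum_range_zero, symbCoeff, half]
        zify at e1 e2
        ring_nf at e1 e2 ⊢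
        rw [e1, e2]
        ring
      · intro x hx
        have hx : x < r := by simpa using hx
        unfold band
        rw [symbCoeff_of_six_le (by omega), symbCoeff_of_six_le (by omega)]
        simp
  · intro x hx
    unfold band
    rw [symbCoeff_of_six_le (by omega), symbCoeff_of_six_le (by omega)]
    simp
  · intro x hx
    rw [Nat.choose_eq_zero_of_lt (by omega)]
    simp

/-! ### Triangular factorisation of the banded matrix -/

/-- The value of `(-1) ^ n * H_{6n+2}` as a polynomial in `n`. -/
def polyP (x : ℚ) : ℚ := (x + 1) * (144 * x ^ 2 + 72 * x - 19)

/-- The value of `(-1) ^ n * H_{6n+4}` as a polynomial in `n`. -/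
def polyW (x : ℚ) : ℚ := 144 * (x + 1) ^ 2

/-- The value of `(-1) ^ n * H_{6n+5}` as a polynomial in `n`. -/
def polyQ (x : ℚ) : ℚ := (x + 1) * (144 * x ^ 2 + 504 * x + 413)

lemma polyP_ne (n : ℕ) : polyP n ≠ 0 := by
  unfold polyP
  rcases n with _ | n
  · norm_num
  · push_cast
    have : (0 : ℚ) ≤ n := n.cast_nonneg
    have h : (0 : ℚ) < 144 * (n + 1) ^ 2 + 72 * (n + 1) - 19 := by nlinarith
    positivity

lemma polyW_ne (n : ℕ) : polyW n ≠ 0 := by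
  unfold polyW
  positivity

lemma polyQ_ne (n : ℕ) : polyQ n ≠ 0 := by
  unfold polyQ
  positivity

/-- The pivot with index `6x + s` of the factorisation of `band`. -/
def pivot : ℕ → ℚ → ℚ
  | 0, _ => 1
  | 1, x => polyP x
  | 2, x => -polyW x / polyP x
  | 3, _ => -1
  | 4, x => polyQ x / polyW x
  | 5, x => -1 / polyQ x
  | _, _ => 0

/-- Column `6x + s` of the unit lower triangular factor of `band`, from the diagonal
entry down to the last nonzero entry. -/
def colList : ℕ → ℚ → List ℚ
  | 0, _ => [1, 5, 10, 10, 5, 1]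
  | 1, x => [1, (3 * polyP x + 12 * (x + 1)) / polyP x, (3 * polyP x + 12 * (x + 1)) / polyP x, 1,
      -1 / polyP x, 1 / polyP x]
  | 2, x => [1, 1, polyP x / polyW x, (polyP x - 12 * (x + 1)) / polyW x,
      -(polyP x - 12 * (x + 1)) / polyW x, -polyP x / polyW x]
  | 3, _ => [1, 3, 2, -2, -3, -1]
  | 4, x => [1, (polyQ x - 12 * (x + 1)) / polyQ x, -(polyQ x - 12 * (x + 1)) / polyQ x, -1,
      polyW x / polyQ x, polyW x / polyQ x]
  | 5, x => [1, -1, -polyQ x, -3 * polyQ x - 12 * (x + 1), -3 * polyQ x - 12 * (x + 1), -polyQ x]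
  | _, _ => []

/-- `colEntry s m x` is the entry `m` places below the diagonal in column `6x + s` of the
unit lower triangular factor of `band`. -/
def colEntry (s m : ℕ) (x : ℚ) : ℚ := (colList s x).getD m 0

/-- The diagonal factor of `band`. -/
def diagD (k : ℕ) : ℚ := pivot (k % 6) (k / 6 : ℕ)

/-- The unit lower triangular factor of `band`; it has bandwidth five. -/
def lowerL (i k : ℕ) : ℚ := if k ≤ i then colEntry (k % 6) (i - k) (k / 6 : ℕ) else 0

lemma colEntry_of_six_le (s : ℕ) {m : ℕ} (h : 6 ≤ m) (x : ℚ) : colEntry s m x = 0 := by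
  obtain ⟨k, rfl⟩ := Nat.exists_eq_add_of_le' h
  match s with
  | 0 => rfl
  | 1 => rfl
  | 2 => rfl
  | 3 => rfl
  | 4 => rfl
  | 5 => rfl
  | _ + 6 => rfl

lemma colEntry_zero {s : ℕ} (h : s < 6) (x : ℚ) : colEntry s 0 x = 1 := by
  interval_cases s <;> rfl

lemma diagD_eq {k : ℕ} (n s : ℕ) (hs : s < 6) (h : k = 6 * n + s) : diagD k = pivot s n := by
  unfold diagD
  rw [show k % 6 = s by omega, show k / 6 = n by omega]

lemma lowerL_eq {i k : ℕ} (n s m : ℕ) (hs : s < 6) (h : k = 6 * n + s) (hi : i = k + m) :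
    lowerL i k = colEntry s m n := by
  unfold lowerL
  rw [if_pos (by omega), show k % 6 = s by omega, show k / 6 = n by omega,
    show i - k = m by omega]

lemma lowerL_of_lt {i k : ℕ} (h : i < k) : lowerL i k = 0 := if_neg (by omega)

/-- The term of index `r + x` of row `r + 5` against row `r + m`, for `r = 6n + s`. -/
lemma term_eq (n s m x : ℕ) (hx : x < 6) :
    lowerL (6 * n + s + 5) (6 * n + s + x) * diagD (6 * n + s + x) *
        lowerL (6 * n + s + m) (6 * n + s + x) =
      if x ≤ m then colEntry ((s + x) % 6) (5 - x) (n + (s + x) / 6 : ℕ) *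
        pivot ((s + x) % 6) (n + (s + x) / 6 : ℕ) *
        colEntry ((s + x) % 6) (m - x) (n + (s + x) / 6 : ℕ) else 0 := by
  have hk : 6 * n + s + x = 6 * (n + (s + x) / 6) + (s + x) % 6 := by omega
  have hs : (s + x) % 6 < 6 := by omega
  split_ifs with h
  · rw [diagD_eq _ _ hs hk, lowerL_eq _ _ (5 - x) hs hk (by omega),
      lowerL_eq _ _ (m - x) hs hk (by omega)]
  · rw [lowerL_of_lt (i := 6 * n + s + m) (by omega), mul_zero]

set_option maxHeartbeats 4000000 in
/-- The entries of `L D Lᵀ` in row `6n + s + 5`, on the diagonal and in the five places before it.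
For each of the 36 pairs `(s, m)` this is an identity between rational functions of `n`. -/
lemma lower_band_aux (n s m : ℕ) (hs : s < 6) (hm : m < 6) :
    ∑ x ∈ Finset.range 6, lowerL (6 * n + s + 5) (6 * n + s + x) * diagD (6 * n + s + x) *
        lowerL (6 * n + s + m) (6 * n + s + x) = symbCoeff (5 - m) := by
  rw [Finset.sum_congr rfl fun x hx => term_eq n s m x (by simpa using hx)]
  have p0 := polyP_ne n
  have p1 := polyP_ne (n + 1)
  have w0 := polyW_ne n
  have w1 := polyW_ne (n + 1)
  have q0 := polyQ_ne n
  have q1 := polyQ_ne (n + 1)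
  push_cast at p1 w1 q1
  interval_cases s <;> interval_cases m <;>
    simp only [Finset.sum_range_succ, Finset.sum_range_zero, Nat.reduceAdd, Nat.reduceMod,
      Nat.reduceDiv, Nat.reduceLeDiff, Nat.reduceSub, if_true, if_false, colEntry, colList, List.getD_cons_zero,
      List.getD_cons_succ, pivot,
      symbCoeff, Nat.cast_add, Nat.cast_one, Nat.cast_zero, Int.cast_zero, add_zero, zero_add, le_refl] <;>
    field_simp <;> (try simp only [polyP, polyW, polyQ]) <;> push_cast <;> ring

set_option maxHeartbeats 4000000 in
lemma lower_band_small (i j : ℕ) (hji : j ≤ i) (hi : i < 5) :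
    ∑ k ∈ Finset.range (i + 1), lowerL i k * diagD k * lowerL j k = band i j := by
  interval_cases i <;> interval_cases j <;>
    simp only [Finset.sum_range_succ, Finset.sum_range_zero, lowerL, diagD, Nat.reduceAdd,
      Nat.reduceMod, Nat.reduceDiv, Nat.reduceLeDiff, Nat.reduceSub, if_true, if_false, colEntry, colList,
      List.getD_cons_zero, List.getD_cons_succ, pivot, band, symbCoeff, le_refl, Nat.cast_zero] <;>
    norm_num [polyP, polyQ, polyW]

lemma lower_band {i j n : ℕ} (hji : j ≤ i) (hi : i < n) :
    ∑ k ∈ Finset.range n, lowerL i k * diagD k * lowerL j k = band i j := by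
  have h0 : ∑ k ∈ Finset.range n, lowerL i k * diagD k * lowerL j k =
      ∑ k ∈ Finset.range (i + 1), lowerL i k * diagD k * lowerL j k := by
    symm
    apply Finset.sum_subset (Finset.range_mono (by omega))
    intro x _ hx
    rw [lowerL_of_lt (by simpa using hx)]
    simp
  rw [h0]
  rcases Nat.lt_or_ge i 5 with h5 | h5
  · exact lower_band_small i j hji h5
  · obtain ⟨r, rfl⟩ := Nat.exists_eq_add_of_le' h5
    rw [show r + 5 + 1 = r + 6 by ring, Finset.sum_range_add, Finset.sum_eq_zero, zero_add]
    · unfold band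
      rw [symbCoeff_of_six_le (m := r + 5 + j + 1) (by omega), add_zero]
      rcases Nat.lt_or_ge j r with hj | hj
      · rw [symbCoeff_of_six_le (by omega), Finset.sum_eq_zero]
        · simp
        · intro x _
          rw [lowerL_of_lt (i := j) (by omega), mul_zero]
      · obtain ⟨m, rfl⟩ := Nat.exists_eq_add_of_le hj
        have h := lower_band_aux (r / 6) (r % 6) m (by omega) (by omega)
        rw [Nat.div_add_mod] at h
        rw [h]
        congr 2
        omega
    · intro k hk
      have hk : k < r := by simpa using hk
      have : lowerL (r + 5) k = 0 := by
        unfold lowerL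
        rw [if_pos (by omega), colEntry_of_six_le _ (by omega)]
      rw [this]
      simp

lemma band_comm (p q : ℕ) : band p q = band q p := by
  unfold band
  rw [add_comm (p - q), add_comm p q]

/-! ### The determinants -/

open Matrix in
/-- Both changes of basis are unit triangular, so only the pivots contribute. -/
lemma hankel_eq_prod_s11 (n : ℕ) :
    (hankel (centralSeq 6) n : ℚ) = ∏ k ∈ Finset.range n, diagD k := by
  let B : Matrix (Fin n) (Fin n) ℤ := .of fun i p => ((2 * i.val + 1).choose (i + 1 + p) : ℤ)
  let M : Matrix (Fin n) (Fin n) ℤ := .of fun p q => band p q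
  let L : Matrix (Fin n) (Fin n) ℚ := .of fun i k => lowerL i k
  have hB : B.det = 1 := by
    rw [det_of_isLowerTriangular B]
    · apply Finset.prod_eq_one
      intro i _
      simp only [B, of_apply]
      rw [show i.val + 1 + i = 2 * i + 1 by ring, Nat.choose_self, Nat.cast_one]
    · intro i j hij
      have hij : i < j := hij
      simp only [B, of_apply]
      rw [Nat.choose_eq_zero_of_lt (by omega), Nat.cast_zero]
  have hL : L.det = 1 := by
    rw [det_of_isLowerTriangular L]
    · apply Finset.prod_eq_one
      intro i _
      simp only [L, of_apply]
      rw [lowerL_eq (i := i) (k := i) (i / 6) (i % 6) 0 (by omega) (by omega) rfl]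
      exact colEntry_zero (by omega) _
    · intro i j hij
      exact lowerL_of_lt hij
  have hH : Matrix.of (fun i j : Fin n => centralSeq 6 (i.val + j.val)) = B * M * Bᵀ := by
    ext i j
    have hBM : ∀ q : Fin n, (B * M) i q = half i q := by
      intro q
      rw [← mul_band i q n i.2, ← Fin.sum_univ_eq_sum_range
        (fun p => ((2 * i.val + 1).choose (i + 1 + p) : ℤ) * band p q)]
      rfl
    rw [mul_apply]
    simp only [hBM, of_apply, transpose_apply]
    rw [← half_mul i j n j.2, ← Fin.sum_univ_eq_sum_range
      (fun q => half i q * ((2 * j.val + 1).choose (j + 1 + q) : ℤ))]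
    rfl
  have hM : M.map (Int.castRingHom ℚ) = L * diagonal (fun k : Fin n => diagD k) * Lᵀ := by
    ext i j
    rw [mul_apply]
    simp only [mul_diagonal, map_apply, transpose_apply, L, M, of_apply]
    rw [Fin.sum_univ_eq_sum_range (fun k => lowerL i k * diagD k * lowerL j k)]
    rcases le_total j i with h | h
    · rw [lower_band h i.2]
      rfl
    · rw [band_comm, Finset.sum_congr rfl fun k _ =>
        (mul_right_comm (lowerL i k) (diagD k) (lowerL j k)).trans
          ((mul_comm _ _).trans (by ring :
            _ = lowerL j k * diagD k * lowerL i k)), lower_band h j.2]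
      rfl
  unfold hankel
  rw [hH, det_mul, det_mul, det_transpose, hB, one_mul, mul_one]
  change Int.castRingHom ℚ M.det = _
  rw [RingHom.map_det, RingHom.mapMatrix_apply, hM, det_mul, det_mul, det_transpose, hL,
    det_diagonal, one_mul, mul_one, Fin.prod_univ_eq_prod_range (fun k => diagD k)]

lemma prod_six_mul (n : ℕ) : ∏ k ∈ Finset.range (6 * n), diagD k = (-1) ^ n := by
  induction n with
  | zero => simp
  | succ n ih =>
    have p0 := polyP_ne n
    have w0 := polyW_ne n
    have q0 := polyQ_ne n
    rw [mul_add, mul_one, Finset.prod_range_add, ih]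
    simp only [Finset.prod_range_succ, Finset.prod_range_zero,
      diagD_eq n 0 (by omega) rfl, diagD_eq n 1 (by omega) rfl, diagD_eq n 2 (by omega) rfl,
      diagD_eq n 3 (by omega) rfl, diagD_eq n 4 (by omega) rfl, diagD_eq n 5 (by omega) rfl,
      pivot]
    field_simp
    ring

theorem hankel_centralSeq_six (n : ℕ) :
    hankel (centralSeq 6) (6 * n) = (-1) ^ n ∧
    hankel (centralSeq 6) (6 * n + 1) = (-1) ^ n ∧
    hankel (centralSeq 6) (6 * n + 2) =
      (-1) ^ n * (n + 1) * (144 * (n : ℤ) ^ 2 + 72 * n - 19) ∧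
    hankel (centralSeq 6) (6 * n + 3) = (-1) ^ (n + 1) * 144 * (n + 1) ^ 2 ∧
    hankel (centralSeq 6) (6 * n + 4) = (-1) ^ n * 144 * (n + 1) ^ 2 ∧
    hankel (centralSeq 6) (6 * n + 5) =
      (-1) ^ n * (n + 1) * (144 * (n : ℤ) ^ 2 + 504 * n + 413) := by
  have p0 := polyP_ne n
  have w0 := polyW_ne n
  have d0 : diagD (6 * n) = 1 := diagD_eq n 0 (by omega) rfl
  have d1 : diagD (6 * n + 1) = polyP n := diagD_eq n 1 (by omega) rfl
  have d2 : diagD (6 * n + 2) = -polyW n / polyP n := diagD_eq n 2 (by omega) rfl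
  have d3 : diagD (6 * n + 3) = -1 := diagD_eq n 3 (by omega) rfl
  have d4 : diagD (6 * n + 4) = polyQ n / polyW n := diagD_eq n 4 (by omega) rfl
  have h0 := hankel_eq_prod_s11 (6 * n)
  have h1 := hankel_eq_prod_s11 (6 * n + 1)
  have h2 := hankel_eq_prod_s11 (6 * n + 2)
  have h3 := hankel_eq_prod_s11 (6 * n + 3)
  have h4 := hankel_eq_prod_s11 (6 * n + 4)
  have h5 := hankel_eq_prod_s11 (6 * n + 5)
  rw [prod_six_mul] at h0
  rw [Finset.prod_range_succ, ← hankel_eq_prod_s11, h0, d0, mul_one] at h1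
  rw [Finset.prod_range_succ, ← hankel_eq_prod_s11, h1, d1] at h2
  rw [Finset.prod_range_succ, ← hankel_eq_prod_s11, h2, d2, mul_assoc, mul_div_cancel₀ _ p0] at h3
  rw [Finset.prod_range_succ, ← hankel_eq_prod_s11, h3, d3] at h4
  rw [Finset.prod_range_succ, ← hankel_eq_prod_s11, h4, d4,
    show (-1 : ℚ) ^ n * -polyW n * -1 * (polyQ n / polyW n)
      = (-1) ^ n * (polyW n * (polyQ n / polyW n)) by ring, mul_div_cancel₀ _ w0] at h5
  unfold polyP at h2
  unfold polyW at h3 h4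
  unfold polyQ at h5
  refine ⟨?_, ?_, ?_, ?_, ?_, ?_⟩ <;> apply Int.cast_injective (α := ℚ)
  · rw [h0]; push_cast; ring
  · rw [h1]; push_cast; ring
  · rw [h2]; push_cast; ring
  · rw [h3]; push_cast; ring
  · rw [h4]; push_cast; ring
  · rw [h5]; push_cast; ring
end

section
/- For every natural number n: H_{8n}(G(x,8)) = 1, H_{8n+1}(G(x,8)) = 1, H_{8n+2}(G(x,8)) = −(2/15)·(n+1)(256n^2+192n+15)(256n^2+192n+17), H_{8n+3}(G(x,8)) = (16/45)·(65536n^4+262144n^3+272896n^2+79104n−3915)(n+1)^2, H_{8n+4}(G(x,8)) = 4096(n+1)^3, H_{8n+5}(G(x,8)) = −4096(n+1)^3, H_{8n+6}(G(x,8)) = (16/45)·(65536n^4+262144n^3+272896n^2−36096n−119115)(n+1)^2, and H_{8n+7}(G(x,8)) = (2/15)·(n+1)(256n^2+832n+655)(256n^2+832n+657). -/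
namespace HankelEight
open Polynomial

/-! ### Shifted Chebyshev polynomials -/

/-- The Chebyshev polynomial `C_m` (`C_m(t + 1/t) = t ^ m + t ^ (-m)`) in the shifted variable
`X = t + 2 + 1/t`. In this variable the Hankel matrix of a functional has the moments of the
powers of `X` as entries. -/
noncomputable def D (m : ℕ) : ℚ[X] := (Chebyshev.C ℚ m).comp (X - 2)

lemma D_zero : D 0 = 2 := by simp [D]

lemma D_one : D 1 = X - 2 := by simp [D]

lemma D_add_two (m : ℕ) : D (m + 2) = (X - 2) * D (m + 1) - D m := by
  simp only [D]
  push_cast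
  rw [Chebyshev.C_add_two]
  simp

lemma D_mul (m k : ℕ) : D (m + k) * D k = D (m + 2 * k) + D m := by
  simp only [D]
  rw [← mul_comp, Chebyshev.C_mul_C, add_comp]
  push_cast
  congr 3 <;> ring

lemma D_monic (m : ℕ) : (D (m + 1)).Monic ∧ (D (m + 1)).natDegree = m + 1 := by
  have hX : (X - 2 : ℚ[X]) = X - C 2 := rfl
  induction m using Nat.twoStepInduction with
  | zero => 
    rw [zero_add, D_one, hX]
    exact ⟨monic_X_sub_C 2, natDegree_X_sub_C 2⟩
  | one =>
    have h : D (1 + 1) = X ^ 2 - 4 * X + 2 := by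
      rw [D_add_two 0, D_one, D_zero]; ring
    rw [h]
    constructor
    · monicity!
    · compute_degree!
  | more m h0 h1 =>
    have h2 : ((X - 2) * D (m + 1 + 1)).Monic := by
      rw [hX]; exact (monic_X_sub_C 2).mul h1.1
    have h3 : ((X - 2) * D (m + 1 + 1)).natDegree = m + 2 + 1 := by
      rw [hX, (monic_X_sub_C 2).natDegree_mul h1.1, natDegree_X_sub_C, h1.2]; ring
    have h4 : (D (m + 1)).natDegree < ((X - 2) * D (m + 1 + 1)).natDegree := by
      rw [h3, h0.2]; omega
    rw [show m + 2 + 1 = m + 1 + 2 by ring, D_add_two]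
    exact ⟨h2.sub_of_left (degree_lt_degree h4), by
      rw [natDegree_sub_eq_left_of_natDegree_lt h4, h3]⟩

/-- The Taylor coefficients of `D m` at `0` up to order `3`: up to the sign `(-1) ^ m` they are
polynomials in `m ^ 2`. -/
lemma D_coeff (m : ℕ) :
    (D m).coeff 0 = (-1) ^ m * 2 ∧
    (D m).coeff 1 = -(-1) ^ m * (m : ℚ) ^ 2 ∧
    (D m).coeff 2 = (-1) ^ m * ((m : ℚ) ^ 2 * (m ^ 2 - 1) / 12) ∧
    (D m).coeff 3 = -(-1) ^ m * ((m : ℚ) ^ 2 * (m ^ 2 - 1) * (m ^ 2 - 4) / 360) := by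
  have h2 : (2 : ℚ[X]) = C 2 := rfl
  induction m using Nat.twoStepInduction with
  | zero => rw [D_zero, h2]; simp [coeff_C]
  | one => rw [D_one, h2]; norm_num [coeff_C, coeff_X]
  | more m h0 h1 =>
    obtain ⟨a0, a1, a2, a3⟩ := h0
    obtain ⟨b0, b1, b2, b3⟩ := h1
    rw [D_add_two, h2]
    simp only [sub_mul, coeff_sub, coeff_C_mul, coeff_X_mul, coeff_X_mul_zero, a0, a1, a2,
      a3, b0, b1, b2, b3]
    push_cast
    refine ⟨?_, ?_, ?_, ?_⟩ <;> ring

/-! ### The moment functionals -/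

/-- The linear functional with `X ^ k ↦ binom(2k, k)`, that is, the constant term in `t` for
`X = t + 2 + 1/t` (integration against the arcsine measure). -/
noncomputable def Lam : ℚ[X] →ₗ[ℚ] ℚ :=
  Polynomial.lsum fun k => (Nat.centralBinom k : ℚ) • LinearMap.id

lemma Lam_X_pow (k : ℕ) : Lam (X ^ k) = (2 * k).choose k := by
  rw [X_pow_eq_monomial]
  simp [Lam, Polynomial.lsum_apply, Polynomial.sum_monomial_index, Nat.centralBinom]

lemma choose_pascal_two (k m : ℕ) :
    (2 * (k + 1)).choose (k + 1 + (m + 1)) =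
      (2 * k).choose (k + m + 2) + 2 * (2 * k).choose (k + m + 1) + (2 * k).choose (k + m) := by
  rw [show 2 * (k + 1) = 2 * k + 1 + 1 by ring, show k + 1 + (m + 1) = k + m + 1 + 1 by ring,
    Nat.choose_succ_succ, Nat.choose_succ_succ, Nat.choose_succ_succ (2 * k) (k + m + 1)]
  ring

/-- The constant term of `(t ^ m + t ^ (-m)) * (t + 2 + 1/t) ^ k`, obtained from the recurrence in
`m` and Pascal's rule. -/
lemma Lam_D_mul_X_pow (m k : ℕ) : Lam (D m * X ^ k) = 2 * (2 * k).choose (k + m) := by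
  have h2 : ∀ p : ℚ[X], Lam (2 * p) = 2 * Lam p := fun p => by
    rw [two_mul, map_add, two_mul]
  induction m using Nat.twoStepInduction generalizing k with
  | zero => rw [D_zero, h2, Lam_X_pow, add_zero]
  | one =>
    rw [D_one, sub_mul, ← pow_succ', map_sub, h2, Lam_X_pow, Lam_X_pow]
    have h : (2 * (k + 1)).choose (k + 1) = 2 * (2 * k).choose k + 2 * (2 * k).choose (k + 1) := by
      cases k with
      | zero => rfl
      | succ k =>
        have hs : (2 * (k + 1)).choose (k + 1 + 1) = (2 * (k + 1)).choose k :=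
          Nat.choose_symm_of_eq_add (by ring)
        rw [show 2 * (k + 1 + 1) = 2 * (k + 1) + 1 + 1 by ring, Nat.choose_succ_succ,
          Nat.choose_succ_succ, Nat.choose_succ_succ (2 * (k + 1)) (k + 1)]
        simp only [Nat.succ_eq_add_one, hs]
        ring
    rw [h]; push_cast; ring
  | more m h0 h1 =>
    have e : D (m + 2) * X ^ k = D (m + 1) * X ^ (k + 1) - 2 * (D (m + 1) * X ^ k) -
        D m * X ^ k := by
      rw [D_add_two]; ring
    rw [e, map_sub, map_sub, h2, h0, h1, h1, choose_pascal_two]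
    push_cast
    simp only [← add_assoc]
    ring

lemma Lam_D (m : ℕ) : Lam (D (m + 1)) = 0 := by
  simpa using Lam_D_mul_X_pow (m + 1) 0

/-- Orthogonality of the `D m`; `0 < j` excludes only `Lam (D 0 * D 0) = 4`. -/
lemma Lam_D_mul_D {i j : ℕ} (hj : 0 < j) : Lam (D i * D j) = if i = j then 2 else 0 := by
  have h0 : ∀ m k, Lam (D (m + 1 + k) * D k) = 0 := fun m k => by
    rw [D_mul, map_add, Lam_D, show m + 1 + 2 * k = m + 2 * k + 1 by ring, Lam_D, add_zero]
  rcases lt_trichotomy i j with h | rfl | h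
  · obtain ⟨d, rfl⟩ := Nat.exists_eq_add_of_lt h
    rw [if_neg h.ne, mul_comm, show i + d + 1 = d + 1 + i by ring, h0]
  · obtain ⟨d, rfl⟩ := Nat.exists_eq_succ_of_ne_zero hj.ne'
    have e := D_mul 0 (d + 1)
    rw [zero_add] at e
    rw [if_pos rfl, Nat.succ_eq_add_one, e, map_add,
      show 0 + 2 * (d + 1) = 2 * d + 1 + 1 by ring, Lam_D]
    simpa using Lam_D_mul_X_pow 0 0
  · obtain ⟨d, rfl⟩ := Nat.exists_eq_add_of_lt h
    rw [if_neg h.ne', show j + d + 1 = d + 1 + j by ring, h0]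

/-- The degree-eight weight `(t ^ 4 + t ^ (-4)) * (t + 2 + 1/t) ^ 4`, which is `(1 + t) ^ 8`
symmetrised under `t ↦ 1/t` (up to the factor `1 / 2`). -/
noncomputable def wt : ℚ[X] := D 4 * X ^ 4

/-- The functional whose moments are `binom(2k+8, k)`, see `ell_X_pow`. -/
noncomputable def ell : ℚ[X] →ₗ[ℚ] ℚ := (1 / 2 : ℚ) • Lam ∘ₗ LinearMap.mulLeft ℚ wt

lemma ell_apply (f : ℚ[X]) : ell f = 1 / 2 * Lam (wt * f) := by
  simp [ell]

lemma ell_X_pow (k : ℕ) : ell (X ^ k) = centralSeq 8 k := by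
  rw [ell_apply, wt, mul_assoc, ← pow_add, Lam_D_mul_X_pow, centralSeq,
    show 2 * (4 + k) = 2 * k + 8 by ring, show 4 + k + 4 = k + 8 by ring,
    Nat.choose_symm_of_eq_add (show 2 * k + 8 = k + 8 + k by ring)]
  push_cast; ring

/-! ### Determinants of Gram matrices -/

/-- Replacing the powers of `X` by monic polynomials of the same degrees is a unitriangular row
operation. -/
lemma det_left (l : ℚ[X] →ₗ[ℚ] ℚ) (m : ℕ) (q s : ℕ → ℚ[X])
    (hq : ∀ i < m, (q i).Monic ∧ (q i).natDegree = i) :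
    (Matrix.of fun i j : Fin m => l (q i * s j)).det =
      (Matrix.of fun i j : Fin m => l (X ^ (i : ℕ) * s j)).det := by
  have h : (Matrix.of fun i j : Fin m => l (q i * s j)) =
      (Matrix.of fun i k : Fin m => (q i).coeff k) *
        (Matrix.of fun i j : Fin m => l (X ^ (i : ℕ) * s j)) := by
    ext i j
    rw [Matrix.mul_apply]
    simp only [Matrix.of_apply]
    conv_lhs => rw [(q i).as_sum_range' m (by rw [(hq i i.2).2]; exact i.2)]
    rw [Finset.sum_mul, map_sum, Finset.sum_range]
    refine Finset.sum_congr rfl fun k _ => ?_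
    rw [← C_mul_X_pow_eq_monomial, ← smul_eq_C_mul, smul_mul_assoc, map_smul, smul_eq_mul]
  rw [h, Matrix.det_mul, Matrix.det_of_isLowerTriangular]
  · rw [Finset.prod_eq_one, one_mul]
    intro i _
    have := (hq i i.2).1.coeff_natDegree
    rw [(hq i i.2).2] at this
    simpa using this
  · intro i k hik
    exact coeff_eq_zero_of_natDegree_lt (by rw [(hq i i.2).2]; exact hik)

lemma det_gram (l : ℚ[X] →ₗ[ℚ] ℚ) (m : ℕ) (q r : ℕ → ℚ[X])
    (hq : ∀ i < m, (q i).Monic ∧ (q i).natDegree = i)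
    (hr : ∀ i < m, (r i).Monic ∧ (r i).natDegree = i) :
    (Matrix.of fun i j : Fin m => l (q i * r j)).det =
      (Matrix.of fun i j : Fin m => l (X ^ (i + j : ℕ))).det := by
  rw [det_left l m q r hq, ← Matrix.det_transpose]
  have h : (Matrix.of fun i j : Fin m => l (X ^ (i : ℕ) * r j)).transpose =
      Matrix.of fun i j : Fin m => l (r i * X ^ (j : ℕ)) := by
    ext i j; simp [mul_comm]
  rw [h, det_left l m r (fun j => X ^ j) hr]
  simp only [pow_add]

lemma hankel_eq (m : ℕ) :
    (hankel (centralSeq 8) m : ℚ) = (Matrix.of fun i j : Fin m => ell (X ^ (i + j : ℕ))).det := by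
  rw [hankel, Int.cast_det]
  congr 1
  ext i j
  simp [ell_X_pow]

/-- If the `Q a` are orthogonal to all polynomials of degree `< N`, the Gram matrix in the bases
`1, …, X ^ (N - 1), Q 0, Q 1, …` and `1, …, X ^ (N - 1), r 0, r 1, …` is block triangular. -/
lemma hankel_block (N k : ℕ) (Q r : ℕ → ℚ[X])
    (hQ : ∀ a < k, (Q a).Monic ∧ (Q a).natDegree = N + a)
    (hr : ∀ a < k, (r a).Monic ∧ (r a).natDegree = N + a)
    (h0 : ∀ a < k, ∀ j < N, ell (Q a * X ^ j) = 0) :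
    (hankel (centralSeq 8) (N + k) : ℚ) = hankel (centralSeq 8) N *
      (Matrix.of fun a b : Fin k => ell (Q a * r b)).det := by
  rw [hankel_eq, hankel_eq, ← det_gram ell (N + k)
    (fun i => if i < N then X ^ i else Q (i - N)) (fun i => if i < N then X ^ i else r (i - N)),
    ← Matrix.det_submatrix_equiv_self finSumFinEquiv, ← Matrix.det_fromBlocks_zero₂₁ _
      (Matrix.of fun (i : Fin N) (b : Fin k) => ell (X ^ (i : ℕ) * r b))]
  · congr 1
    ext (i | i) (j | j)
    · simp [pow_add]
    · simp
    · simp [h0 i i.2 j j.2]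
    · simp
  · intro i hi
    split_ifs with h
    · exact ⟨monic_X_pow i, natDegree_X_pow i⟩
    · have := hQ (i - N) (by omega)
      rwa [show N + (i - N) = i by omega] at this
  · intro i hi
    split_ifs with h
    · exact ⟨monic_X_pow i, natDegree_X_pow i⟩
    · have := hr (i - N) (by omega)
      rwa [show N + (i - N) = i by omega] at this

/-! ### Polynomials orthogonal to degree less than `8n` -/

/-- The coefficient of `D (8n+1) + D (8n+7)` in `F n a`, for `a < 8`. Together `x1`, …, `x4` are the
unique solution of the four linear equations saying that `X ^ 4` divides `F n a`; for `8 ≤ a` the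
value is irrelevant. -/
def x1 (n : ℚ) : ℕ → ℚ
  | 0 => 8
  | 1 => -35 - 4266 / 5 * n - 20480 / 3 * n ^ 2 - 57344 / 3 * n ^ 3 - 65536 / 3 * n ^ 4
      - 131072 / 15 * n ^ 5
  | 2 => 112 + 23696 / 15 * n + 39424 / 3 * n ^ 2 + 37888 * n ^ 3 + 131072 / 3 * n ^ 4
      + 262144 / 15 * n ^ 5
  | 3 => -294 - 31034 / 15 * n - 18432 * n ^ 2 - 167936 / 3 * n ^ 3 - 65536 * n ^ 4
      - 131072 / 5 * n ^ 5
  | 4 => 672 + 33632 / 15 * n + 66560 / 3 * n ^ 2 + 219136 / 3 * n ^ 3 + 262144 / 3 * n ^ 4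
      + 524288 / 15 * n ^ 5
  | 5 => -1386 - 6206 / 3 * n - 71680 / 3 * n ^ 2 - 266240 / 3 * n ^ 3 - 327680 / 3 * n ^ 4
      - 131072 / 3 * n ^ 5
  | 6 => 2640 + 23728 / 15 * n + 23040 * n ^ 2 + 308224 / 3 * n ^ 3 + 131072 * n ^ 4
      + 262144 / 5 * n ^ 5
  | 7 => -4719 - 13426 / 15 * n - 57344 / 3 * n ^ 2 - 114688 * n ^ 3 - 458752 / 3 * n ^ 4
      - 917504 / 15 * n ^ 5
  | _ => 0

/-- The coefficient of `D (8n+2) + D (8n+6)` in `F n a`, for `a < 8`; see `x1`. -/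
def x2 (n : ℚ) : ℕ → ℚ
  | 0 => 28
  | 1 => -160 - 78688 / 15 * n - 41472 * n ^ 2 - 345088 / 3 * n ^ 3 - 131072 * n ^ 4
      - 262144 / 5 * n ^ 5
  | 2 => 567 + 145736 / 15 * n + 79872 * n ^ 2 + 684032 / 3 * n ^ 3 + 262144 * n ^ 4
      + 524288 / 5 * n ^ 5
  | 3 => -1568 - 63648 / 5 * n - 112128 * n ^ 2 - 336896 * n ^ 3 - 393216 * n ^ 4
      - 786432 / 5 * n ^ 5
  | 4 => 3696 + 206992 / 15 * n + 135168 * n ^ 2 + 1318912 / 3 * n ^ 3 + 524288 * n ^ 4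
      + 1048576 / 5 * n ^ 5
  | 5 => -7776 - 38176 / 3 * n - 145920 * n ^ 2 - 1602560 / 3 * n ^ 3 - 655360 * n ^ 4
      - 262144 * n ^ 5
  | 6 => 15015 + 48456 / 5 * n + 141312 * n ^ 2 + 618496 * n ^ 3 + 786432 * n ^ 4
      + 1572864 / 5 * n ^ 5
  | 7 => -27104 - 80416 / 15 * n - 118272 * n ^ 2 - 2071552 / 3 * n ^ 3 - 917504 * n ^ 4
      - 1835008 / 5 * n ^ 5
  | _ => 0

/-- The coefficient of `D (8n+3) + D (8n+5)` in `F n a`, for `a < 8`; see `x1`. -/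
def x3 (n : ℚ) : ℕ → ℚ
  | 0 => 56
  | 1 => -350 - 39962 / 3 * n - 104448 * n ^ 2 - 864256 / 3 * n ^ 3 - 327680 * n ^ 4
      - 131072 * n ^ 5
  | 2 => 1296 + 74032 / 3 * n + 201216 * n ^ 2 + 1713152 / 3 * n ^ 3 + 655360 * n ^ 4
      + 262144 * n ^ 5
  | 3 => -3675 - 32346 * n - 282624 * n ^ 2 - 843776 * n ^ 3 - 983040 * n ^ 4 - 393216 * n ^ 5
  | 4 => 8800 + 105248 / 3 * n + 340992 * n ^ 2 + 3303424 / 3 * n ^ 3 + 1310720 * n ^ 4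
      + 524288 * n ^ 5
  | 5 => -18711 - 97090 / 3 * n - 368640 * n ^ 2 - 4014080 / 3 * n ^ 3 - 1638400 * n ^ 4
      - 655360 * n ^ 5
  | 6 => 36400 + 24624 * n + 357888 * n ^ 2 + 1549312 * n ^ 3 + 1966080 * n ^ 4 + 786432 * n ^ 5
  | 7 => -66066 - 40502 / 3 * n - 301056 * n ^ 2 - 5189632 / 3 * n ^ 3 - 2293760 * n ^ 4
      - 917504 * n ^ 5
  | _ => 0

/-- The coefficient of `D (8n+4)` in `F n a`, for `a < 8`; see `x1`. -/
def x4 (n : ℚ) : ℕ → ℚ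
  | 0 => 70
  | 1 => -448 - 17856 * n - 418816 / 3 * n ^ 2 - 1153024 / 3 * n ^ 3 - 1310720 / 3 * n ^ 4
      - 524288 / 3 * n ^ 5
  | 2 => 1680 + 99248 / 3 * n + 806912 / 3 * n ^ 2 + 761856 * n ^ 3 + 2621440 / 3 * n ^ 4
      + 1048576 / 3 * n ^ 5
  | 3 => -4800 - 130112 / 3 * n - 377856 * n ^ 2 - 3377152 / 3 * n ^ 3 - 1310720 * n ^ 4
      - 524288 * n ^ 5
  | 4 => 11550 + 141152 / 3 * n + 1368064 / 3 * n ^ 2 + 4407296 / 3 * n ^ 3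
      + 5242880 / 3 * n ^ 4 + 2097152 / 3 * n ^ 5
  | 5 => -24640 - 130240 / 3 * n - 1479680 / 3 * n ^ 2 - 5355520 / 3 * n ^ 3
      - 6553600 / 3 * n ^ 4 - 2621440 / 3 * n ^ 5
  | 6 => 48048 + 99088 / 3 * n + 479232 * n ^ 2 + 6201344 / 3 * n ^ 3 + 2621440 * n ^ 4
      + 1048576 * n ^ 5
  | 7 => -87360 - 54208 / 3 * n - 1211392 / 3 * n ^ 2 - 2308096 * n ^ 3 - 9175040 / 3 * n ^ 4
      - 3670016 / 3 * n ^ 5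
  | _ => 0


/-- A combination of `D (8n), D (8n+1), …` that is divisible by `wt`. The quotient `Q` is monic of
degree `8n + a` and orthogonal under `ell` to all polynomials of degree `< 8n`. The grouping of
the terms makes divisibility by `D 4` automatic. -/
noncomputable def F (n a : ℕ) : ℚ[X] :=
  D (8 * n + (8 + a)) + D (8 * n + a) + C (x1 n a) * (D (8 * n + 7) + D (8 * n + 1)) +
    C (x2 n a) * (D (8 * n + 6) + D (8 * n + 2)) + C (x3 n a) * (D (8 * n + 5) + D (8 * n + 3)) +
    C (x4 n a) * D (8 * n + 4)

lemma D_four_dvd (n : ℕ) : D 4 ∣ D (8 * n + 4) := by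
  induction n with
  | zero => simp
  | succ n ih =>
    have e := D_mul (8 * n + 4) 4
    have e' : D (8 * (n + 1) + 4) = D (8 * n + 4 + 4) * D 4 - D (8 * n + 4) := by
      rw [e, add_sub_cancel_right]; ring_nf
    rw [e']
    exact (Dvd.intro_left _ rfl).sub ih

lemma D_four_dvd_F (n a : ℕ) : D 4 ∣ F n a := by
  have h (i : ℕ) (j : ℕ) (k : ℕ) (h1 : i + k = 4) (h2 : j = 4 + k) :
      D 4 ∣ D (8 * n + j) + D (8 * n + i) := by
    have e := D_mul (8 * n + i) k
    rw [show 8 * n + j = 8 * n + i + 2 * k by omega, ← e, add_assoc, h1]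
    exact (D_four_dvd n).mul_right _
  have h8 : D 4 ∣ D (8 * n + (8 + a)) + D (8 * n + a) := by
    rw [show 8 * n + (8 + a) = 8 * n + a + 2 * 4 by ring, ← D_mul]
    exact Dvd.intro_left _ rfl
  exact ((((h8.add ((h 1 7 3 rfl rfl).mul_left _)).add ((h 2 6 2 rfl rfl).mul_left _)).add
    ((h 3 5 1 rfl rfl).mul_left _)).add ((D_four_dvd n).mul_left _))

/-- The coefficients of `F n a` below `X ^ 4` vanish; this is where the explicit values of
`x1`, …, `x4` enter. -/
lemma X_pow_dvd_F (n a : ℕ) (ha : a < 8) : X ^ 4 ∣ F n a := by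
  have hs (j : ℕ) : ((-1 : ℚ)) ^ (8 * n + j) = (-1) ^ j := by
    rw [pow_add, pow_mul]; norm_num
  rw [X_pow_dvd_iff]
  intro d hd
  interval_cases a <;> interval_cases d <;>
    simp only [F, coeff_add, coeff_C_mul, (D_coeff _).1, (D_coeff _).2.1, (D_coeff _).2.2.1,
      (D_coeff _).2.2.2, hs, x1, x2, x3, x4] <;> push_cast <;> ring

lemma D_four : D 4 = X ^ 4 - 8 * X ^ 3 + 20 * X ^ 2 - 16 * X + 2 := by
  rw [D_add_two 2, D_add_two 1, D_add_two 0, D_one, D_zero]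
  ring

lemma isCoprime_D_four : IsCoprime (D 4) (X ^ 4) := by
  refine IsCoprime.pow_right ⟨C (1 / 2), -C (1 / 2) * (X ^ 3 - 8 * X ^ 2 + 20 * X - 16), ?_⟩
  have h : C (1 / 2 : ℚ) * 2 = 1 := by
    rw [show (2 : ℚ[X]) = C 2 from rfl, ← C_mul]; norm_num
  rw [D_four]
  linear_combination h

lemma wt_monic : wt.Monic ∧ wt.natDegree = 8 := by
  have h := D_monic 3
  refine ⟨h.1.mul (monic_X_pow 4), ?_⟩
  rw [wt, h.1.natDegree_mul (monic_X_pow 4), h.2, natDegree_X_pow]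

lemma natDegree_D_le (m : ℕ) : (D m).natDegree ≤ m := by
  cases m with
  | zero => rw [D_zero]; exact (natDegree_C (2 : ℚ)).le
  | succ m => exact (D_monic m).2.le

lemma monic_of_lower {p q : ℚ[X]} {m : ℕ} (hp : p.Monic ∧ p.natDegree = m)
    (hq : q.natDegree < m) : (p + q).Monic ∧ (p + q).natDegree = m := by
  have h : q.natDegree < p.natDegree := by rwa [hp.2]
  exact ⟨hp.1.add_of_left (degree_lt_degree h), by
    rw [natDegree_add_eq_left_of_natDegree_lt h, hp.2]⟩

lemma F_monic (n a : ℕ) : (F n a).Monic ∧ (F n a).natDegree = 8 * n + 8 + a := by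
  have h1 := D_monic (8 * n + 7 + a)
  rw [show 8 * n + 7 + a + 1 = 8 * n + (8 + a) by ring] at h1
  have hC (x : ℚ) (p : ℚ[X]) (hp : p.natDegree ≤ 8 * n + 7 + a) :
      (C x * p).natDegree ≤ 8 * n + 7 + a := (natDegree_C_mul_le x p).trans hp
  have hD (j : ℕ) (hj : j ≤ 7 + a) : (D (8 * n + j)).natDegree ≤ 8 * n + 7 + a :=
    (natDegree_D_le _).trans (by omega)
  have hF : F n a = D (8 * n + (8 + a)) + (D (8 * n + a) +
      C (x1 n a) * (D (8 * n + 7) + D (8 * n + 1)) +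
      C (x2 n a) * (D (8 * n + 6) + D (8 * n + 2)) +
      C (x3 n a) * (D (8 * n + 5) + D (8 * n + 3)) + C (x4 n a) * D (8 * n + 4)) := by
    rw [F]; ring
  rw [hF, show 8 * n + 8 + a = 8 * n + (8 + a) by ring]
  refine monic_of_lower h1 (Nat.lt_of_le_of_lt (m := 8 * n + 7 + a) ?_ (by omega))
  refine natDegree_add_le_of_degree_le (natDegree_add_le_of_degree_le
    (natDegree_add_le_of_degree_le (natDegree_add_le_of_degree_le (hD _ (by omega)) ?_) ?_) ?_) ?_
  all_goals apply hC
  all_goals try apply natDegree_add_le_of_degree_le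
  all_goals exact hD _ (by omega)

lemma exists_Q (n a : ℕ) (ha : a < 8) :
    ∃ Q : ℚ[X], wt * Q = F n a ∧ Q.Monic ∧ Q.natDegree = 8 * n + a := by
  obtain ⟨Q, hQ⟩ := isCoprime_D_four.mul_dvd (D_four_dvd_F n a) (X_pow_dvd_F n a ha)
  change F n a = wt * Q at hQ
  have hm := F_monic n a
  rw [hQ] at hm
  have hQm : Q.Monic := wt_monic.1.of_mul_monic_left hm.1
  refine ⟨Q, hQ.symm, hQm, ?_⟩
  have := wt_monic.1.natDegree_mul hQm
  rw [hm.2, wt_monic.2] at this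
  omega

lemma Lam_F_mul_X_pow (n a j : ℕ) (hj : j ≤ 8 * n) :
    Lam (F n a * X ^ j) = if a = 0 ∧ j = 8 * n then 2 else 0 := by
  have h (i : ℕ) (hi : 0 < i) : Lam (D (8 * n + i) * X ^ j) = 0 := by
    rw [Lam_D_mul_X_pow, Nat.choose_eq_zero_of_lt (by omega)]; simp
  have hC (x : ℚ) (p : ℚ[X]) : Lam (C x * p) = x * Lam p := by
    rw [← smul_eq_C_mul, map_smul, smul_eq_mul]
  simp only [F, add_mul, mul_add, mul_assoc, map_add, hC]
  rw [h _ (by omega : 0 < 8 + a), h 1, h 2, h 3, h 4, h 5, h 6, h 7] <;> try norm_num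
  rw [Lam_D_mul_X_pow]
  split_ifs with h0
  · rw [h0.1, h0.2, add_zero, two_mul (8 * n), Nat.choose_self]; simp
  · rw [Nat.choose_eq_zero_of_lt (by omega)]; simp

/-- The entry `(a, b)`, for `a, b < 8`, of the Gram matrix of the polynomials `F n a / wt` against
`colPoly n b`. -/
def pat (n : ℚ) (a : ℕ) : ℕ → ℚ
  | 0 => if a = 0 then 1 else 0
  | 1 => (if a = 1 then 1 else 0) + x1 n a
  | 2 => (if a = 2 then 1 else 0) + x2 n a
  | 3 => (if a = 3 then 1 else 0) + x3 n a
  | 4 => (if a = 4 then 1 else 0) + x4 n a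
  | 5 => (if a = 5 then 1 else 0) - (if a = 3 then 1 else 0)
  | 6 => (if a = 6 then 1 else 0) - (if a = 2 then 1 else 0)
  | 7 => (if a = 7 then 1 else 0) - (if a = 1 then 1 else 0)
  | _ => 0

/-- Monic polynomials of degree `8n + b` for `b < 8`. For `b = 0` a power of `X` is used because
`D 0 = 2` is not monic; for `b = 5, 6, 7` the subtracted term cancels the contributions of
`x3`, `x2`, `x1` to the Gram matrix. -/
noncomputable def colPoly (n : ℕ) : ℕ → ℚ[X]
  | 0 => X ^ (8 * n)
  | 5 => D (8 * n + 5) - D (8 * n + 3)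
  | 6 => D (8 * n + 6) - D (8 * n + 2)
  | 7 => D (8 * n + 7) - D (8 * n + 1)
  | b => D (8 * n + b)

lemma colPoly_monic (n b : ℕ) (hb : b < 8) :
    (colPoly n b).Monic ∧ (colPoly n b).natDegree = 8 * n + b := by
  have h (b c : ℕ) (hc : c < b + 1) : (D (8 * n + (b + 1)) - D (8 * n + c)).Monic ∧
      (D (8 * n + (b + 1)) - D (8 * n + c)).natDegree = 8 * n + (b + 1) := by
    rw [sub_eq_add_neg]
    refine monic_of_lower (D_monic (8 * n + b)) ?_
    rw [natDegree_neg]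
    exact Nat.lt_of_le_of_lt (natDegree_D_le _) (by omega)
  interval_cases b
  · exact ⟨monic_X_pow _, natDegree_X_pow _⟩
  · exact D_monic _
  · exact D_monic _
  · exact D_monic _
  · exact D_monic _
  · exact h 4 3 (by omega)
  · exact h 5 2 (by omega)
  · exact h 6 1 (by omega)

lemma Lam_F_mul_colPoly (n a b : ℕ) (ha : a < 8) (hb : b < 8) :
    1 / 2 * Lam (F n a * colPoly n b) = pat n a b := by
  have hC (x : ℚ) (p : ℚ[X]) : Lam (C x * p) = x * Lam p := by
    rw [← smul_eq_C_mul, map_smul, smul_eq_mul]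
  have hD (i j : ℕ) (hj : 0 < j) :
      Lam (D (8 * n + i) * D (8 * n + j)) = if i = j then 2 else 0 := by
    rw [Lam_D_mul_D (by omega)]; simp
  interval_cases b
  · rw [colPoly, Lam_F_mul_X_pow n a _ le_rfl, pat]; split_ifs <;> simp_all
  all_goals
    simp only [colPoly, F, add_mul, mul_add, mul_sub, mul_assoc, map_add, map_sub, hC]
    repeat rw [hD _ _ (by norm_num)]
    interval_cases a <;> norm_num [pat] <;> ring

/-- The quotient of the Hankel determinants of orders `8n + k` and `8n` is a `k × k`
determinant. -/
lemma hankel_eq_det (n k : ℕ) (hk : k ≤ 8) :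
    (hankel (centralSeq 8) (8 * n + k) : ℚ) = hankel (centralSeq 8) (8 * n) *
      (Matrix.of fun a b : Fin k => pat n a b).det := by
  choose! Q h1 h2 using exists_Q n
  rw [hankel_block (8 * n) k Q (colPoly n) (fun a ha => h2 a (by omega))
    (fun a ha => colPoly_monic n a (by omega))]
  · congr 2
    ext a b
    simp only [Matrix.of_apply]
    rw [ell_apply, ← mul_assoc, h1 a (by omega), Lam_F_mul_colPoly n a b (by omega) (by omega)]
  · intro a ha j hj
    rw [ell_apply, ← mul_assoc, h1 a (by omega), Lam_F_mul_X_pow n a j hj.le,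
      if_neg (by omega), mul_zero]

/-! ### Evaluation of the small determinants -/

/-- The Schur complement of the trailing `k × k` identity block in the leading
`(5 + k) × (5 + k)` block of `pat n`, with row `0` and the trivial column `0` removed. -/
def schur (n : ℚ) (k : ℕ) (a b : Fin 4) : ℚ :=
  pat n (a + 1) (b + 1) - ∑ c : Fin k, pat n (a + 1) (5 + c) * pat n (5 + c) (b + 1)

lemma det_pat (n : ℚ) (k : ℕ) (hk : k ≤ 3) :
    (Matrix.of fun a b : Fin (5 + k) => pat n a b).det = (Matrix.of (schur n k)).det := by
  have e : (Matrix.of fun a b : Fin (5 + k) => pat n a b).submatrix finSumFinEquiv finSumFinEquiv =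
      Matrix.fromBlocks (Matrix.of fun a b : Fin 5 => pat n a b)
        (Matrix.of fun (a : Fin 5) (b : Fin k) => pat n a (5 + b))
        (Matrix.of fun (a : Fin k) (b : Fin 5) => pat n (5 + a) b) 1 := by
    ext (i | i) (j | j)
    · simp
    · simp
    · simp
    · simp only [Matrix.submatrix_apply, Matrix.of_apply, Matrix.fromBlocks_apply₂₂,
        finSumFinEquiv_apply_right, Fin.val_natAdd, Matrix.one_apply]
      obtain ⟨i, hi⟩ := i
      obtain ⟨j, hj⟩ := j
      have hi' : i < 3 := by omega
      have hj' : j < 3 := by omega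
      simp only [Fin.mk.injEq]
      clear hi hj
      interval_cases i <;> interval_cases j <;> simp [pat]
  rw [← Matrix.det_submatrix_equiv_self finSumFinEquiv, e, Matrix.det_fromBlocks_one₂₂,
    Matrix.det_succ_column_zero, Fin.sum_univ_succ]
  have h0 (i : Fin 5) : ((Matrix.of fun a b : Fin 5 => pat n a b) -
      (Matrix.of fun (a : Fin 5) (b : Fin k) => pat n a (5 + b)) *
        (Matrix.of fun (a : Fin k) (b : Fin 5) => pat n (5 + a) b)) i 0 =
      if i = 0 then 1 else 0 := by
    simp [Matrix.mul_apply, pat]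
  simp only [h0]
  simp only [Fin.succ_ne_zero, if_false, mul_zero, zero_mul, Finset.sum_const_zero, add_zero,
    if_true, Fin.val_zero, pow_zero, one_mul, mul_one]
  congr 1

/-- Laplace expansion along the first two rows. -/
lemma det_four (b : Fin 4 → Fin 4 → ℚ) : (Matrix.of b).det =
    (b 0 0 * b 1 1 - b 0 1 * b 1 0) * (b 2 2 * b 3 3 - b 2 3 * b 3 2)
    - (b 0 0 * b 1 2 - b 0 2 * b 1 0) * (b 2 1 * b 3 3 - b 2 3 * b 3 1)
    + (b 0 0 * b 1 3 - b 0 3 * b 1 0) * (b 2 1 * b 3 2 - b 2 2 * b 3 1)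
    + (b 0 1 * b 1 2 - b 0 2 * b 1 1) * (b 2 0 * b 3 3 - b 2 3 * b 3 0)
    - (b 0 1 * b 1 3 - b 0 3 * b 1 1) * (b 2 0 * b 3 2 - b 2 2 * b 3 0)
    + (b 0 2 * b 1 3 - b 0 3 * b 1 2) * (b 2 0 * b 3 1 - b 2 1 * b 3 0) := by
  simp [Matrix.det_succ_row_zero, Fin.sum_univ_succ, Fin.succAbove]
  ring

lemma det_pat_8 (n : ℚ) : (Matrix.of fun a b : Fin 8 => pat n a b).det = 1 := by
  rw [det_pat n 3 (by norm_num), det_four]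
  simp [schur, Fin.sum_univ_succ, pat, x1, x2, x3, x4]
  ring

lemma det_pat_7 (n : ℚ) : (Matrix.of fun a b : Fin 7 => pat n a b).det =
      2 / 15 * (n + 1) * (256 * (n : ℚ) ^ 2 + 832 * n + 655) *
        (256 * (n : ℚ) ^ 2 + 832 * n + 657) := by
  rw [det_pat n 2 (by norm_num), det_four]
  simp [schur, Fin.sum_univ_succ, pat, x1, x2, x3, x4]
  ring

lemma det_pat_6 (n : ℚ) : (Matrix.of fun a b : Fin 6 => pat n a b).det =
      16 / 45 *
        (65536 * (n : ℚ) ^ 4 + 262144 * (n : ℚ) ^ 3 + 272896 * (n : ℚ) ^ 2 -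
          36096 * n - 119115) * (n + 1) ^ 2 := by
  rw [det_pat n 1 (by norm_num), det_four]
  simp [schur, pat, x1, x2, x3, x4]
  ring

lemma det_pat_5 (n : ℚ) : (Matrix.of fun a b : Fin 5 => pat n a b).det =
    -4096 * (n + 1) ^ 3 := by
  rw [det_pat n 0 (by norm_num), det_four]
  simp [schur, pat, x1, x2, x3, x4]
  ring

lemma det_pat_4 (n : ℚ) : (Matrix.of fun a b : Fin 4 => pat n a b).det =
    4096 * (n + 1) ^ 3 := by
  rw [det_four]
  simp [pat, x1, x2, x3]
  ring

lemma det_pat_3 (n : ℚ) : (Matrix.of fun a b : Fin 3 => pat n a b).det =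
      16 / 45 *
        (65536 * (n : ℚ) ^ 4 + 262144 * (n : ℚ) ^ 3 + 272896 * (n : ℚ) ^ 2 +
          79104 * n - 3915) * (n + 1) ^ 2 := by
  rw [Matrix.det_fin_three]
  simp [pat, x1, x2]
  ring

lemma det_pat_2 (n : ℚ) : (Matrix.of fun a b : Fin 2 => pat n a b).det =
      -(2 / 15) * (n + 1) * (256 * (n : ℚ) ^ 2 + 192 * n + 15) *
        (256 * (n : ℚ) ^ 2 + 192 * n + 17) := by
  rw [Matrix.det_fin_two]
  simp [pat, x1]
  ring

lemma det_pat_1 (n : ℚ) : (Matrix.of fun a b : Fin 1 => pat n a b).det = 1 := by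
  simp [pat]

lemma hankel_eight_mul (n : ℕ) : (hankel (centralSeq 8) (8 * n) : ℚ) = 1 := by
  induction n with
  | zero => simp [hankel]
  | succ n ih => rw [mul_add_one, hankel_eq_det n 8 le_rfl, ih, det_pat_8, one_mul]

end HankelEight

theorem hankel_centralSeq_eight (n : ℕ) :
    (hankel (centralSeq 8) (8 * n) : ℚ) = 1 ∧
    (hankel (centralSeq 8) (8 * n + 1) : ℚ) = 1 ∧
    (hankel (centralSeq 8) (8 * n + 2) : ℚ) =
      -(2 / 15) * (n + 1) * (256 * (n : ℚ) ^ 2 + 192 * n + 15) *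
        (256 * (n : ℚ) ^ 2 + 192 * n + 17) ∧
    (hankel (centralSeq 8) (8 * n + 3) : ℚ) =
      16 / 45 *
        (65536 * (n : ℚ) ^ 4 + 262144 * (n : ℚ) ^ 3 + 272896 * (n : ℚ) ^ 2 +
          79104 * n - 3915) * (n + 1) ^ 2 ∧
    (hankel (centralSeq 8) (8 * n + 4) : ℚ) = 4096 * (n + 1) ^ 3 ∧
    (hankel (centralSeq 8) (8 * n + 5) : ℚ) = -4096 * (n + 1) ^ 3 ∧
    (hankel (centralSeq 8) (8 * n + 6) : ℚ) =
      16 / 45 *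
        (65536 * (n : ℚ) ^ 4 + 262144 * (n : ℚ) ^ 3 + 272896 * (n : ℚ) ^ 2 -
          36096 * n - 119115) * (n + 1) ^ 2 ∧
    (hankel (centralSeq 8) (8 * n + 7) : ℚ) =
      2 / 15 * (n + 1) * (256 * (n : ℚ) ^ 2 + 832 * n + 655) *
        (256 * (n : ℚ) ^ 2 + 832 * n + 657) := by
  have h (k : ℕ) (hk : k ≤ 8) : (hankel (centralSeq 8) (8 * n + k) : ℚ) =
      (Matrix.of fun a b : Fin k => HankelEight.pat n a b).det := by
    rw [HankelEight.hankel_eq_det n k hk, HankelEight.hankel_eight_mul, one_mul]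
  refine ⟨HankelEight.hankel_eight_mul n, ?_, ?_, ?_, ?_, ?_, ?_, ?_⟩
  · rw [h 1 (by norm_num), HankelEight.det_pat_1]
  · rw [h 2 (by norm_num), HankelEight.det_pat_2]
  · rw [h 3 (by norm_num), HankelEight.det_pat_3]
  · rw [h 4 (by norm_num), HankelEight.det_pat_4]
  · rw [h 5 (by norm_num), HankelEight.det_pat_5]
  · rw [h 6 (by norm_num), HankelEight.det_pat_6]
  · rw [h 7 (by norm_num), HankelEight.det_pat_7]
end

section
/- For every natural number t, the polynomial identity (y+1)^{2t+1} − 1 = ∑_{i=0}^{t} ((2t+1)/(2t−2i+1))·binom(2t−i, i)·(y+1)^i·y^{2t−2i+1} holds in the polynomial ring ℚ[y]. -/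
/-!
The elements `a = X + 1` and `b = -1` satisfy `a + b = X` and `-a * b = X + 1`, so both the
sequence `a ^ n + b ^ n` and the Lucas-type polynomials
`F m = ∑ i, (m - i).choose i * (X + 1) ^ i * X ^ (m - 2 * i)`
obey the recurrence `u (n + 2) = X * u (n + 1) + (X + 1) * u n` (`lucasSum_add_two`, which is
Pascal's rule). Comparing initial values gives
`a ^ (m + 2) + b ^ (m + 2) = X * F (m + 1) + 2 * (X + 1) * F m` (`pow_add_pow_eq_lucasSum`).
For `m + 2 = 2 * t + 1` the left side is `(X + 1) ^ (2 * t + 1) - 1`, and the coefficients on the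
right are `(2t - i).choose i + 2 * (2t - i).choose (i - 1)`, which `coeff_eq` identifies with the
quotients in the theorem.
-/

open Polynomial

/-- The Lucas-type polynomial `∑ i, (m - i).choose i * (X + 1) ^ i * X ^ (m - 2 * i)`. The truncated
subtraction is harmless: the binomial coefficient vanishes as soon as `m < 2 * i`. -/
noncomputable def lucasSum (m : ℕ) : ℚ[X] :=
  ∑ i ∈ Finset.range (m + 1), ((m - i).choose i : ℚ[X]) * (X + 1) ^ i * X ^ (m - 2 * i)

theorem lucasSum_eq_sum_range {m N : ℕ} (h : m < 2 * N) (hN : N ≤ m + 1) :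
    lucasSum m =
      ∑ i ∈ Finset.range N, ((m - i).choose i : ℚ[X]) * (X + 1) ^ i * X ^ (m - 2 * i) := by
  unfold lucasSum
  symm
  apply Finset.sum_subset
  · intro i
    simp only [Finset.mem_range]
    omega
  · intro i _ hi
    simp only [Finset.mem_range] at hi
    rw [Nat.choose_eq_zero_of_lt (by omega)]
    simp

/-- Pascal's rule applied to each coefficient of `lucasSum (m + 2)`. -/
theorem lucasSum_add_two (m : ℕ) :
    lucasSum (m + 2) = X * lucasSum (m + 1) + (X + 1) * lucasSum m := by
  rw [lucasSum_eq_sum_range (m := m + 2) (N := m + 2) (by omega) (by omega)]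
  unfold lucasSum
  rw [Finset.sum_range_succ', Finset.sum_range_succ' _ (m + 1), mul_add, Finset.mul_sum,
    Finset.mul_sum, add_right_comm, ← Finset.sum_add_distrib]
  congr 1
  · refine Finset.sum_congr rfl fun i hi => ?_
    simp only [Finset.mem_range] at hi
    rw [show m + 2 - (i + 1) = (m - i) + 1 by omega, show m + 1 - (i + 1) = m - i by omega,
      show m + 2 - 2 * (i + 1) = m - 2 * i by omega, Nat.choose_succ_succ]
    by_cases h : 2 * i + 1 ≤ m
    · rw [show m - 2 * i = (m + 1 - 2 * (i + 1)) + 1 by omega]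
      push_cast
      ring
    -- Here `m + 1 - 2 * (i + 1)` truncates, but its coefficient is zero.
    · rw [Nat.choose_eq_zero_of_lt (show m - i < i + 1 by omega)]
      push_cast
      ring
  · simp
    ring

theorem pow_add_pow_eq_lucasSum (m : ℕ) :
    (X + 1 : ℚ[X]) ^ (m + 2) + (-1) ^ (m + 2) =
      X * lucasSum (m + 1) + 2 * (X + 1) * lucasSum m := by
  have h0 : lucasSum 0 = 1 := by simp [lucasSum]
  have h1 : lucasSum 1 = X := by simp [lucasSum, Finset.sum_range_succ]
  induction m using Nat.twoStepInduction with
  | zero => rw [h0, h1]; ring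
  | one => rw [lucasSum_add_two, h0, h1]; ring
  | more n ih1 ih2 =>
    rw [lucasSum_add_two (n + 1), lucasSum_add_two n]
    rw [lucasSum_add_two n] at ih2
    linear_combination (X + 1) * ih1 + X * ih2

/-- With `i = j + 1` and `t = s + 1`, the rational coefficient of the identity as an integer; it
follows from `(j + 1) * n.choose (j + 1) = (n - j) * n.choose j` for `n = 2 * t - i`. -/
theorem coeff_eq {s j : ℕ} (h : j ≤ s) :
    (2 * ((s + 1 : ℕ) : ℚ) + 1) / (2 * ((s + 1 : ℕ) : ℚ) - 2 * ((j + 1 : ℕ) : ℚ) + 1) *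
        ((2 * s + 1 - j).choose (j + 1) : ℚ) =
      (((2 * s + 1 - j).choose (j + 1) + 2 * (2 * s + 1 - j).choose j : ℕ) : ℚ) := by
  obtain ⟨d, rfl⟩ := Nat.exists_eq_add_of_le h
  have key := Nat.choose_succ_right_eq (2 * (j + d) + 1 - j) j
  rw [show 2 * (j + d) + 1 - j - j = 2 * d + 1 by omega] at key
  have key' := congrArg (Nat.cast : ℕ → ℚ) key
  push_cast at key' ⊢
  have hd : (2 * (d : ℚ) + 1) ≠ 0 := by positivity
  rw [show 2 * ((j : ℚ) + d + 1) - 2 * (j + 1) + 1 = 2 * d + 1 by ring, div_mul_eq_mul_div,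
    div_eq_iff hd]
  linear_combination 2 * key'

theorem poly_identity_odd (t : ℕ) :
    ((X + 1 : ℚ[X]) ^ (2 * t + 1) - 1) =
      ∑ i ∈ Finset.range (t + 1),
        C ((2 * (t : ℚ) + 1) / (2 * (t : ℚ) - 2 * (i : ℚ) + 1) * ((2 * t - i).choose i : ℚ)) *
          (X + 1) ^ i * X ^ (2 * t - 2 * i + 1) := by
  rcases t with _ | s
  · simp
  have hV := pow_add_pow_eq_lucasSum (2 * s + 1)
  rw [Odd.neg_one_pow ⟨s + 1, by ring⟩, ← sub_eq_add_neg] at hV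
  rw [show 2 * (s + 1) + 1 = 2 * s + 1 + 2 by ring, hV,
    lucasSum_eq_sum_range (m := 2 * s + 1 + 1) (N := s + 2) (by omega) (by omega),
    lucasSum_eq_sum_range (m := 2 * s + 1) (N := s + 1) (by omega) (by omega),
    Finset.sum_range_succ', Finset.sum_range_succ' _ (s + 1), mul_add, Finset.mul_sum,
    Finset.mul_sum, add_right_comm, ← Finset.sum_add_distrib]
  congr 1
  · refine Finset.sum_congr rfl fun j hj => ?_
    have hj : j ≤ s := by simpa [Nat.lt_succ_iff] using hj
    rw [show 2 * (s + 1) - (j + 1) = 2 * s + 1 - j by omega, coeff_eq hj,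
      show 2 * s + 1 + 1 - (j + 1) = 2 * s + 1 - j by omega,
      show 2 * s + 1 + 1 - 2 * (j + 1) = 2 * s - 2 * j by omega,
      show 2 * (s + 1) - 2 * (j + 1) + 1 = 2 * s - 2 * j + 1 by omega,
      show 2 * s + 1 - 2 * j = 2 * s - 2 * j + 1 by omega, map_natCast]
    push_cast
    ring
  · have h : 2 * ((s + 1 : ℕ) : ℚ) + 1 ≠ 0 := by positivity
    have h1 : (2 * ((s + 1 : ℕ) : ℚ) + 1) / (2 * ((s + 1 : ℕ) : ℚ) - 2 * ((0 : ℕ) : ℚ) + 1) = 1 := by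
      rw [Nat.cast_zero, mul_zero, sub_zero, div_self h]
    rw [h1]
    simp
    ring
end
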